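/- Let {(H_i, U_i) : i ∈ ℕ} be a family of Z2-graded Hilbert spaces, let N_i ⊆ B(H_i) be von Neumann algebras with U_iN_iU_i = N_i, and let ξ = {ξ_i} be a sequence of unit vectors with U_iξ_i = ξ_i for all i. Then the twisted commutant of the infinite Fermi tensor product satisfies (⊗̂_ξ N_i)^≀ = ⊗̂_ξ N_i^≀, as von Neumann algebras on the infinite tensor product Hilbert space ⊗_ξ H_i graded by ⊗_{i∈ℕ} U_i. -/

import Mathlib

noncomputable section

open scoped InnerProductSpace ComplexOrder

/-- The even part `T₊ = (T + UTU)/2` and odd part `T₋ = (T - UTU)/2` of an operator on a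
`ℤ₂`-graded Hilbert space `(H, U)`;  the *twist automorphism* is `η_U(T) = T₊ + i U T₋`. -/
def twist {H : Type*} [NormedAddCommGroup H] [InnerProductSpace ℂ H]
    (U : H →L[ℂ] H) (T : H →L[ℂ] H) : H →L[ℂ] H :=
  (2⁻¹ : ℂ) • (T + U * T * U) + ((2⁻¹ : ℂ) * Complex.I) • (U * (T - U * T * U))

/-- The *twisted commutant* `M^≀ = η_U(M')` of a set of operators on a `ℤ₂`-graded Hilbert
space `(H, U)` (for `ad U`-invariant `M` this coincides with `η_U(M)'`). -/
def twistedComm {H : Type*} [NormedAddCommGroup H] [InnerProductSpace ℂ H]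
    (U : H →L[ℂ] H) (M : Set (H →L[ℂ] H)) : Set (H →L[ℂ] H) :=
  twist U '' Set.centralizer M

/-- The set of generating operators `T₁ ⊗̂ ⋯ ⊗̂ T_k ⊗̂ 1 ⊗̂ 1 ⊗̂ ⋯` (with each `Tᵢ ∈ N i`
homogeneous) of the infinite Fermi tensor product `⊗̂ N i` of graded von Neumann algebras,
acting on a realization `tp` of the infinite tensor product Hilbert space: on simple tensors
with homogeneous entries, `(T₁ ⊗̂ ⋯ ⊗̂ T_k ⊗̂ 1 ⊗̂ ⋯)(x₁ ⊗ ⋯ ⊗ xₙ) = ε ⋅ (T₁ x₁ ⊗ ⋯)` with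
the Koszul sign `ε = (-1)^#{(i,j) : j < i, Tᵢ odd, xⱼ odd}`.  The infinite Fermi product
`⊗̂ N i` itself is the von Neumann algebra this set generates (its double commutant). -/
def infFermiGen {H : ℕ → Type*} [∀ i, NormedAddCommGroup (H i)]
    [∀ i, InnerProductSpace ℂ (H i)]
    {HH : Type*} [NormedAddCommGroup HH] [InnerProductSpace ℂ HH]
    (U : ∀ i : ℕ, H i →L[ℂ] H i)
    (tp : (n : ℕ) → ((i : Fin n) → H i.val) → HH)
    (N : ∀ i : ℕ, Set (H i →L[ℂ] H i)) : Set (HH →L[ℂ] HH) :=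
  {P : HH →L[ℂ] HH |
    ∃ (k : ℕ) (T : (i : Fin k) → (H i.val →L[ℂ] H i.val)) (sT : Fin k → Bool),
      (∀ i : Fin k, T i ∈ N i.val) ∧
      (∀ i : Fin k, U i.val * T i * U i.val = cond (sT i) (-(T i)) (T i)) ∧
      ∀ (n : ℕ), k ≤ n → ∀ (x : (i : Fin n) → H i.val) (sx : Fin n → Bool),
        (∀ i : Fin n, U i.val (x i) = cond (sx i) (-(x i)) (x i)) →
        P (tp n x) = ((-1 : ℂ) ^ (Finset.univ.filter (fun p : Fin n × Fin n =>
            p.2 < p.1 ∧ (if h : (p.1 : ℕ) < k then sT ⟨p.1, h⟩ else false) = true ∧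
            sx p.2 = true)).card) •
          tp n (fun i : Fin n => if h : (i : ℕ) < k then T ⟨i, h⟩ (x i) else x i)}

/-!
Up to double commutants, the Fermi product of the `Nᵢ` is generated by Jordan–Wigner operators: an
odd element of `Nᵢ` carries the string of the gradings `Uⱼ`, `j < i`. The twist by `W = ⨂ Uⱼ` turns
such a string into the complementary one over `j > i`, and twists the element of `Nᵢ` by `Uᵢ`. With
`Aᵢ = η(Nᵢ)` the claim becomes that the operators with strings `j > i` over `Aᵢ` and those with
strings `j < i` over `Aᵢ'` have commutants that commute. One may compress to finitely many factors,
by the projection onto `H₀ ⊗ ⋯ ⊗ Hₙ₋₁ ⊗ ξₙ ⊗ ⋯`, and decompose into homogeneous parts; multiplying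
these by products of the `Uⱼ` removes the strings and leaves the commutation theorem for ungraded
tensor products.

For the latter, let `x` commute with the `Aᵢ` and `y` with the `Aᵢ'`, and put `ω = ⨂ ωᵢ` and
`ω' = ⨂ ω'ᵢ`. On simple tensors, commutation with `x` only involves the antilinear relations
`a ωᵢ ↦ a* ω'ᵢ`, `a ∈ Aᵢ`, and commutation with `y` the adjoints of these, which are the
corresponding relations for `Aᵢ'`. The relations are unbounded, hence do not tensor. They are
therefore made linear by a conjugation and replaced by the corners of the projections onto
`{(u, δ v) | (u, v) ∈ R}`, which are bounded. As `δ → 0` this gives `⟪y* ω', x ω⟫ = ⟪x* ω', y ω⟫`,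
that is, `x y = y x`.
-/

section Regularization

open Filter Topology ContinuousLinearMap

variable {E F : Type*} [NormedAddCommGroup E] [InnerProductSpace ℂ E]
  [NormedAddCommGroup F] [InnerProductSpace ℂ F]

lemma tendsto_of_mem_closure_of_norm_le_one {ι : Type*} {l : Filter ι} {C : ι → E →L[ℂ] E}
    (hC : ∀ i, ‖C i‖ ≤ 1) {T : E →L[ℂ] E} {s : Set E} (hs : ∀ x ∈ s, Tendsto (C · x) l (𝓝 (T x)))
    {x : E} (hx : x ∈ closure s) : Tendsto (C · x) l (𝓝 (T x)) := by
  have hequi : Equicontinuous fun i => (C i : E → E) :=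
    (LipschitzWith.uniformEquicontinuous _ 1 fun i =>
      (C i).lipschitz.weaken (by exact_mod_cast hC i)).equicontinuous
  exact closure_minimal hs (hequi.isClosed_setOfPred_tendsto T.continuous) hx

lemma commute_starProjection [CompleteSpace E] {K : Submodule ℂ E} [K.HasOrthogonalProjection]
    {T : E →L[ℂ] E} (hT : ∀ x ∈ K, T x ∈ K) (hT' : ∀ x ∈ K, star T x ∈ K) :
    Commute T K.starProjection := by
  ext z
  refine (Submodule.eq_starProjection_of_mem_of_inner_eq_zero
    (hT _ (K.starProjection_apply_mem z)) fun w hw => ?_).symm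
  change ⟪T z - T (K.starProjection z), w⟫_ℂ = 0
  rw [← map_sub, ← adjoint_inner_right]
  exact K.starProjection_inner_eq_zero z _ (hT' w hw)

/-- The Hilbert sum operator `a ⊕ b` on `E ⊕ F`. -/
def directSum (a : E →L[ℂ] E) (b : F →L[ℂ] F) : WithLp 2 (E × F) →L[ℂ] WithLp 2 (E × F) :=
  (WithLp.prodContinuousLinearEquiv 2 ℂ E F).symm ∘L a.prodMap b ∘L
    (WithLp.prodContinuousLinearEquiv 2 ℂ E F : WithLp 2 (E × F) →L[ℂ] E × F)

lemma directSum_toLp (a : E →L[ℂ] E) (b : F →L[ℂ] F) (u : E) (v : F) :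
    directSum a b (WithLp.toLp 2 (u, v)) = WithLp.toLp 2 (a u, b v) := rfl

lemma star_directSum [CompleteSpace E] [CompleteSpace F] (a : E →L[ℂ] E) (b : F →L[ℂ] F) :
    star (directSum a b) = directSum (star a) (star b) := by
  rw [star_eq_adjoint, eq_comm, eq_adjoint_iff]
  rintro ⟨u, v⟩ ⟨u', v'⟩
  simp [directSum_toLp, WithLp.prod_inner_apply, star_eq_adjoint, adjoint_inner_left]

/-- The closure of `{(u, δ v) | (u, v) ∈ R}` in the Hilbert sum `E ⊕ F`. -/
def dilation (R : Submodule ℂ (E × F)) (δ : ℝ) : Submodule ℂ (WithLp 2 (E × F)) :=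
  (R.map ((WithLp.linearEquiv 2 ℂ (E × F)).symm.toLinearMap ∘ₗ
    LinearMap.id.prodMap (δ • LinearMap.id))).topologicalClosure

variable {R : Submodule ℂ (E × F)} {δ : ℝ}

lemma toLp_mem_dilation {u : E} {v : F} (huv : (u, v) ∈ R) :
    WithLp.toLp 2 (u, δ • v) ∈ dilation R δ :=
  Submodule.le_topologicalClosure _ ⟨(u, v), huv, rfl⟩

lemma map_mem_closure_of_mem_dilation {X : Type*} [TopologicalSpace X]
    {f : WithLp 2 (E × F) → X} (hf : Continuous f) {s : Set X}
    (hs : ∀ u v, (u, v) ∈ R → f (WithLp.toLp 2 (u, δ • v)) ∈ s)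
    {z : WithLp 2 (E × F)} (hz : z ∈ dilation R δ) : f z ∈ closure s := by
  refine map_mem_closure hf hz ?_
  rintro _ ⟨⟨u, v⟩, huv, rfl⟩
  exact hs u v huv

lemma mem_closure_of_toLp_mem_dilation (hδ : δ ≠ 0) {u : E} {v : F}
    (h : WithLp.toLp 2 (u, v) ∈ dilation R δ) : (u, δ⁻¹ • v) ∈ closure (R : Set (E × F)) := by
  have hf : Continuous fun z : WithLp 2 (E × F) => (z.fst, δ⁻¹ • z.snd) := by fun_prop
  refine map_mem_closure_of_mem_dilation hf (fun u v huv => ?_) h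
  simpa [hδ] using huv

lemma toLp_mem_dilation_orthogonal_iff {g : F} {k : E} :
    WithLp.toLp 2 (-(δ • k), g) ∈ (dilation R δ)ᗮ ↔
      ∀ u v, (u, v) ∈ R → (δ : ℂ) * (⟪v, g⟫_ℂ - ⟪u, k⟫_ℂ) = 0 := by
  rw [dilation, Submodule.orthogonal_closure, Submodule.mem_orthogonal]
  constructor
  · intro h u v huv
    have := h _ ⟨(u, v), huv, rfl⟩
    simp [inner_smul_left_eq_smul, inner_smul_right_eq_smul] at this
    linear_combination this
  · rintro h _ ⟨⟨u, v⟩, huv, rfl⟩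
    have := h u v huv
    simp [inner_smul_left_eq_smul, inner_smul_right_eq_smul]
    linear_combination this

variable [CompleteSpace E] [CompleteSpace F]

instance : CompleteSpace (dilation R δ) :=
  (Submodule.isClosed_topologicalClosure _).completeSpace_coe

/-- For a linear relation `R ⊆ E × F`, write the orthogonal projection onto `dilation R δ` as a
`2 × 2` matrix; this is its upper left corner. As `δ → 0` it tends strongly to `1` on the domain
of `R`. -/
def regSource (R : Submodule ℂ (E × F)) (δ : ℝ) : E →L[ℂ] E :=
  WithLp.fstL 2 ℂ E F ∘L (dilation R δ).starProjection ∘L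
    (WithLp.prodContinuousLinearEquiv 2 ℂ E F).symm ∘L inl ℂ E F

/-- The bounded operator replacing the linear relation `R`: `δ⁻¹` times the lower left corner of
the projection onto `dilation R δ`. -/
def regOp (R : Submodule ℂ (E × F)) (δ : ℝ) : E →L[ℂ] F :=
  δ⁻¹ • WithLp.sndL 2 ℂ E F ∘L (dilation R δ).starProjection ∘L
    (WithLp.prodContinuousLinearEquiv 2 ℂ E F).symm ∘L inl ℂ E F

/-- `1` minus the lower right corner of the projection onto `dilation R δ`. As `δ → 0` it tends
strongly to `1` on the domain of the adjoint relation. -/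
def regTarget (R : Submodule ℂ (E × F)) (δ : ℝ) : F →L[ℂ] F :=
  WithLp.sndL 2 ℂ E F ∘L (dilation R δ)ᗮ.starProjection ∘L
    (WithLp.prodContinuousLinearEquiv 2 ℂ E F).symm ∘L inr ℂ E F

lemma starProjection_dilation_inl (hδ : δ ≠ 0) (h : E) :
    (dilation R δ).starProjection (WithLp.toLp 2 (h, 0)) =
      WithLp.toLp 2 (regSource R δ h, δ • regOp R δ h) := by
  refine WithLp.ofLp_injective _ (Prod.ext rfl ?_)
  simp [regOp, hδ]

lemma starProjection_dilation_inr (hδ : δ ≠ 0) (k : F) :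
    (dilation R δ).starProjection (WithLp.toLp 2 (0, k)) =
      WithLp.toLp 2 (δ • adjoint (regOp R δ) k, k - regTarget R δ k) := by
  refine WithLp.ofLp_injective _ (Prod.ext (ext_inner_left ℂ fun h => ?_) ?_)
  · have := (dilation R δ).inner_starProjection_left_eq_right (WithLp.toLp 2 (h, 0))
      (WithLp.toLp 2 (0, k))
    rw [starProjection_dilation_inl hδ] at this
    simpa [WithLp.prod_inner_apply, inner_smul_left_eq_smul, inner_smul_right_eq_smul,
      adjoint_inner_right] using this.symm
  · simp [regTarget]

lemma norm_regSource_le : ‖regSource R δ‖ ≤ 1 := by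
  refine opNorm_le_bound _ zero_le_one fun h => ?_
  calc ‖regSource R δ h‖ ≤ ‖(dilation R δ).starProjection (WithLp.toLp 2 (h, 0))‖ :=
        WithLp.norm_fst_le _ _
    _ ≤ ‖WithLp.toLp 2 (h, (0 : F))‖ := Submodule.norm_starProjection_apply_le _ _
    _ = 1 * ‖h‖ := by simp

lemma norm_regTarget_le : ‖regTarget R δ‖ ≤ 1 := by
  refine opNorm_le_bound _ zero_le_one fun k => ?_
  calc ‖regTarget R δ k‖ ≤ ‖(dilation R δ)ᗮ.starProjection (WithLp.toLp 2 (0, k))‖ :=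
        WithLp.norm_snd_le _ _
    _ ≤ ‖WithLp.toLp 2 ((0 : E), k)‖ := Submodule.norm_starProjection_apply_le _ _
    _ = 1 * ‖k‖ := by simp

lemma regSource_regOp_mem_closure (hδ : δ ≠ 0) (h : E) :
    (regSource R δ h, regOp R δ h) ∈ closure (R : Set (E × F)) := by
  have hmem := (dilation R δ).starProjection_apply_mem (WithLp.toLp 2 (h, 0))
  rw [starProjection_dilation_inl hδ] at hmem
  simpa [hδ] using mem_closure_of_toLp_mem_dilation hδ hmem

lemma regTarget_adjoint_regOp_mem_adjoint (hδ : δ ≠ 0) (k : F) :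
    (regTarget R δ k, adjoint (regOp R δ) k) ∈ R.adjoint := by
  have horth := (dilation R δ).sub_starProjection_mem_orthogonal (WithLp.toLp 2 (0, k))
  rw [starProjection_dilation_inr hδ, ← WithLp.toLp_sub, Prod.mk_sub_mk, zero_sub, sub_sub_cancel,
    toLp_mem_dilation_orthogonal_iff] at horth
  rw [Submodule.mem_adjoint_iff]
  intro u v huv
  exact (mul_eq_zero.1 (horth u v huv)).resolve_left (by exact_mod_cast hδ)

lemma adjoint_regOp_mem_closure_domain (hδ : δ ≠ 0) (k : F) :
    adjoint (regOp R δ) k ∈ closure (Prod.fst '' (R : Set (E × F))) := by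
  have hmem := (dilation R δ).starProjection_apply_mem (WithLp.toLp 2 (0, k))
  rw [starProjection_dilation_inr hδ] at hmem
  have hf : Continuous fun z : WithLp 2 (E × F) => δ⁻¹ • z.fst := by fun_prop
  have := map_mem_closure_of_mem_dilation hf (s := Prod.fst '' (R : Set (E × F)))
    (fun u v huv => ⟨δ⁻¹ • (u, v), R.smul_of_tower_mem _ huv, rfl⟩) hmem
  simpa [hδ] using this

lemma starProjection_dilation_apply (hδ : δ ≠ 0) (u : E) (v : F) :
    (dilation R δ).starProjection (WithLp.toLp 2 (u, v)) =
      WithLp.toLp 2 (regSource R δ u + δ • adjoint (regOp R δ) v,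
        δ • regOp R δ u + (v - regTarget R δ v)) := by
  have hsplit : WithLp.toLp 2 (u, v) = WithLp.toLp 2 (u, 0) + WithLp.toLp 2 (0, v) := by
    simp [← WithLp.toLp_add]
  rw [hsplit, map_add, starProjection_dilation_inl hδ, starProjection_dilation_inr hδ]
  rfl

lemma regOp_of_mem (hδ : δ ≠ 0) {u : E} {v : F} (huv : (u, v) ∈ R) :
    regOp R δ u = regTarget R δ v := by
  have hfix := Submodule.starProjection_eq_self_iff.2 (toLp_mem_dilation (δ := δ) huv)
  rw [starProjection_dilation_apply hδ] at hfix
  have hsnd := congrArg WithLp.snd hfix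
  simp only [WithLp.toLp_snd, map_smul_of_tower, ← smul_sub, ← smul_add] at hsnd
  have := smul_right_injective F hδ hsnd
  rw [← add_sub_assoc, sub_eq_iff_eq_add'] at this
  exact add_right_cancel this

lemma norm_regSource_sub_le (hδ : δ ≠ 0) {u : E} {v : F} (huv : (u, v) ∈ R) :
    ‖regSource R δ u - u‖ ≤ |δ| * ‖v‖ := by
  have hfix := Submodule.starProjection_eq_self_iff.2 (toLp_mem_dilation (δ := δ) huv)
  rw [starProjection_dilation_apply hδ] at hfix
  have hfst : regSource R δ u - u = -(δ • δ • adjoint (regOp R δ) v) := by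
    rw [sub_eq_iff_eq_add, ← sub_eq_neg_add, eq_sub_iff_add_eq]
    simpa using congrArg WithLp.fst hfix
  have hle : ‖δ • adjoint (regOp R δ) v‖ ≤ ‖v‖ := by
    have := (WithLp.norm_fst_le _ _).trans
      ((dilation R δ).norm_starProjection_apply_le (WithLp.toLp 2 (0, v)))
    simpa [starProjection_dilation_inr hδ] using this
  rw [hfst, norm_neg, norm_smul, Real.norm_eq_abs]
  gcongr

lemma starProjection_dilation_of_mem_adjoint {g : F} {k : E} (hgk : (g, k) ∈ R.adjoint) :
    (dilation R δ).starProjection (WithLp.toLp 2 (-(δ • k), g)) = 0 := by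
  rw [Submodule.starProjection_apply_eq_zero_iff, toLp_mem_dilation_orthogonal_iff]
  intro u v huv
  rw [(R.mem_adjoint_iff _).1 hgk u v huv, mul_zero]

lemma adjoint_regOp_of_mem_adjoint (hδ : δ ≠ 0) {g : F} {k : E} (hgk : (g, k) ∈ R.adjoint) :
    adjoint (regOp R δ) g = regSource R δ k := by
  have hzero := starProjection_dilation_of_mem_adjoint (δ := δ) hgk
  rw [starProjection_dilation_apply hδ] at hzero
  have hfst := congrArg WithLp.fst hzero
  simp only [map_neg, map_smul_of_tower, neg_add_eq_sub, ← smul_sub, WithLp.toLp_fst] at hfst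
  exact sub_eq_zero.1 ((smul_eq_zero.1 hfst).resolve_left hδ)

lemma norm_regTarget_sub_le (hδ : δ ≠ 0) {g : F} {k : E} (hgk : (g, k) ∈ R.adjoint) :
    ‖regTarget R δ g - g‖ ≤ |δ| * ‖k‖ := by
  have hzero := starProjection_dilation_of_mem_adjoint (δ := δ) hgk
  rw [starProjection_dilation_apply hδ] at hzero
  have hsnd : regTarget R δ g - g = -(δ • δ • regOp R δ k) := by
    have := congrArg WithLp.snd hzero
    simp only [map_neg, map_smul_of_tower, smul_neg, WithLp.toLp_snd, WithLp.zero_snd] at this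
    rw [neg_add_eq_zero.1 this, neg_sub]
  have hle : ‖δ • regOp R δ k‖ ≤ ‖k‖ := by
    have := (WithLp.norm_snd_le _ _).trans
      ((dilation R δ).norm_starProjection_apply_le (WithLp.toLp 2 (k, 0)))
    simpa [starProjection_dilation_inl hδ] using this
  rw [hsnd, norm_neg, norm_smul, Real.norm_eq_abs]
  gcongr

lemma tendsto_regSource {u : E} (hu : u ∈ closure (Prod.fst '' (R : Set (E × F)))) :
    Tendsto (fun δ => regSource R δ u) (𝓝[≠] 0) (𝓝 u) := by
  refine tendsto_of_mem_closure_of_norm_le_one (T := .id ℂ E)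
    (fun δ => norm_regSource_le) ?_ hu
  rintro _ ⟨⟨u, v⟩, huv, rfl⟩
  have hbound : Tendsto (fun δ : ℝ => |δ| * ‖v‖) (𝓝[≠] 0) (𝓝 0) :=
    tendsto_nhdsWithin_of_tendsto_nhds ((by fun_prop : Continuous _).tendsto' _ _ (by simp))
  refine tendsto_iff_norm_sub_tendsto_zero.2 (squeeze_zero' (.of_forall fun _ => norm_nonneg _)
    ?_ hbound)
  filter_upwards [self_mem_nhdsWithin] with δ hδ using norm_regSource_sub_le hδ huv

lemma tendsto_regTarget {g : F} (hg : g ∈ closure (Prod.fst '' (R.adjoint : Set (F × E)))) :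
    Tendsto (fun δ => regTarget R δ g) (𝓝[≠] 0) (𝓝 g) := by
  refine tendsto_of_mem_closure_of_norm_le_one (T := .id ℂ F)
    (fun δ => norm_regTarget_le) ?_ hg
  rintro _ ⟨⟨g, k⟩, hgk, rfl⟩
  have hbound : Tendsto (fun δ : ℝ => |δ| * ‖k‖) (𝓝[≠] 0) (𝓝 0) :=
    tendsto_nhdsWithin_of_tendsto_nhds ((by fun_prop : Continuous _).tendsto' _ _ (by simp))
  refine tendsto_iff_norm_sub_tendsto_zero.2 (squeeze_zero' (.of_forall fun _ => norm_nonneg _)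
    ?_ hbound)
  filter_upwards [self_mem_nhdsWithin] with δ hδ using norm_regTarget_sub_le hδ hgk

lemma regOp_intertwines {a : E →L[ℂ] E} {b : F →L[ℂ] F}
    (h : ∀ u v, (u, v) ∈ R → (a u, b v) ∈ R)
    (h' : ∀ u v, (u, v) ∈ R → (star a u, star b v) ∈ R) (x : E) :
    b (regOp R δ x) = regOp R δ (a x) := by
  have hinv : ∀ {a : E →L[ℂ] E} {b : F →L[ℂ] F}, (∀ u v, (u, v) ∈ R → (a u, b v) ∈ R) →
      ∀ z ∈ dilation R δ, directSum a b z ∈ dilation R δ := by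
    intro a b hab z hz
    refine map_mem_closure_of_mem_dilation (directSum a b).continuous (fun u v huv => ?_) hz
    rw [directSum_toLp, map_smul_of_tower]
    exact ⟨_, hab u v huv, rfl⟩
  have hcomm := commute_starProjection (hinv h) (star_directSum a b ▸ hinv h')
  have := congrArg WithLp.snd (DFunLike.congr_fun hcomm.eq (WithLp.toLp 2 (x, 0)))
  simpa [regOp, directSum] using congrArg (δ⁻¹ • ·) this

end Regularization

section CyclicSubspaces

open Filter Topology ContinuousLinearMap

variable {H : Type*} [NormedAddCommGroup H] [InnerProductSpace ℂ H] [CompleteSpace H]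

/-- The space of operators of a von Neumann algebra. -/
abbrev operators (A : VonNeumannAlgebra H) : Submodule ℂ (H →L[ℂ] H) :=
  A.toStarSubalgebra.toSubalgebra.toSubmodule

/-- The orbit `A ω` of a vector under a von Neumann algebra. -/
def orbit (A : VonNeumannAlgebra H) (ω : H) : Submodule ℂ H :=
  (operators A).map (apply ℂ H ω).toLinearMap

lemma mem_orbit {A : VonNeumannAlgebra H} {ω x : H} : x ∈ orbit A ω ↔ ∃ a ∈ A, a ω = x := Iff.rfl

/-- The orthogonal projection onto the closure of the orbit `A ω`. -/
def cyclicProjection (A : VonNeumannAlgebra H) (ω : H) : H →L[ℂ] H :=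
  (orbit A ω).topologicalClosure.starProjection

lemma cyclicProjection_of_mem_closure {A : VonNeumannAlgebra H} {ω x : H}
    (hx : x ∈ closure (orbit A ω : Set H)) : cyclicProjection A ω x = x :=
  Submodule.starProjection_eq_self_iff.2 hx

lemma cyclicProjection_mem_closure (A : VonNeumannAlgebra H) (ω x : H) :
    cyclicProjection A ω x ∈ closure (orbit A ω : Set H) :=
  (orbit A ω).topologicalClosure.starProjection_apply_mem x

lemma norm_cyclicProjection_le (A : VonNeumannAlgebra H) (ω : H) : ‖cyclicProjection A ω‖ ≤ 1 :=
  Submodule.starProjection_norm_le _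

lemma star_cyclicProjection (A : VonNeumannAlgebra H) (ω : H) :
    star (cyclicProjection A ω) = cyclicProjection A ω :=
  isSelfAdjoint_starProjection _

lemma cyclicProjection_mem_commutant (A : VonNeumannAlgebra H) (ω : H) :
    cyclicProjection A ω ∈ A.commutant := by
  have hinv : ∀ a ∈ A, ∀ x ∈ (orbit A ω).topologicalClosure,
      a x ∈ (orbit A ω).topologicalClosure := by
    intro a ha x hx
    refine map_mem_closure a.continuous hx ?_
    rintro _ ⟨b, hb, rfl⟩
    exact mem_orbit.2 ⟨a * b, mul_mem ha hb, rfl⟩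
  refine VonNeumannAlgebra.mem_commutant_iff.2 fun a ha => ?_
  exact commute_starProjection (hinv a ha) (hinv _ (star_mem ha))

/-- The graph `{(a ω, a* ω') | a ∈ A}`. -/
def starOrbit (A : VonNeumannAlgebra H) (ω ω' : H) : Set (H × H) :=
  Set.image (fun a : H →L[ℂ] H => (a ω, star a ω')) A

/-- A pair `(p, q)` formally adjoint to `a ω ↦ a* ω'` is a limit of pairs `(b ω, b* ω')` with `b`
in the commutant: regularize the linear relation `a ω ↦ a p`, which commutes with `A`. -/
lemma mem_closure_starOrbit_commutant {A : VonNeumannAlgebra H} {ω ω' p q : H}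
    (hp : p ∈ closure (orbit A ω' : Set H)) (hq : q ∈ closure (orbit A ω : Set H))
    (hpq : ∀ a ∈ A, ⟪q, a ω⟫_ℂ = ⟪star a ω', p⟫_ℂ) :
    (p, q) ∈ closure (starOrbit A.commutant ω ω') := by
  set R : Submodule ℂ (H × H) :=
    (operators A).map ((apply ℂ H ω).toLinearMap.prod (apply ℂ H p).toLinearMap)
  have mem_R : ∀ a ∈ A, (a ω, a p) ∈ R := fun a ha => ⟨a, ha, rfl⟩
  have mem_adjoint : ∀ a ∈ A, (a ω', a q) ∈ R.adjoint := by
    intro a ha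
    rw [Submodule.mem_adjoint_iff]
    rintro _ _ ⟨b, hb, h⟩
    obtain ⟨rfl, rfl⟩ := Prod.mk.inj h
    have := congrArg (starRingEnd ℂ) (hpq (star a * b) (mul_mem (star_mem ha) hb))
    simpa [sub_eq_zero, star_eq_adjoint, adjoint_inner_left, adjoint_inner_right] using this.symm
  have hcomm : ∀ δ, regOp R δ ∈ A.commutant := by
    have hinv : ∀ a ∈ A, ∀ u v, (u, v) ∈ R → (a u, a v) ∈ R := by
      rintro a ha _ _ ⟨b, hb, h⟩
      obtain ⟨rfl, rfl⟩ := Prod.mk.inj h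
      exact mem_R (a * b) (mul_mem ha hb)
    refine fun δ => VonNeumannAlgebra.mem_commutant_iff.2 fun a ha => ContinuousLinearMap.ext ?_
    exact regOp_intertwines (hinv a ha) (hinv _ (star_mem ha))
  have htarget : Tendsto (fun δ => regTarget R δ p) (𝓝[≠] 0) (𝓝 p) := by
    refine tendsto_regTarget (closure_mono ?_ hp)
    rintro _ ⟨a, ha, rfl⟩
    exact ⟨_, mem_adjoint a ha, rfl⟩
  have hsource : Tendsto (fun δ => regSource R δ q) (𝓝[≠] 0) (𝓝 q) := by
    refine tendsto_regSource (closure_mono ?_ hq)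
    rintro _ ⟨a, ha, rfl⟩
    exact ⟨_, mem_R a ha, rfl⟩
  refine mem_closure_of_tendsto (htarget.prodMk_nhds hsource) ?_
  filter_upwards [self_mem_nhdsWithin] with δ hδ
  refine ⟨regOp R δ, hcomm δ, Prod.ext ?_ ?_⟩
  · exact regOp_of_mem hδ (mem_R 1 (one_mem A))
  · exact adjoint_regOp_of_mem_adjoint hδ (mem_adjoint 1 (one_mem A))

end CyclicSubspaces

section Conjugations

open ContinuousLinearMap

variable {H : Type*} [NormedAddCommGroup H] [InnerProductSpace ℂ H]

/-- `J` is a conjugation: an antiunitary involution. -/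
structure IsConjugation (J : H →L⋆[ℂ] H) : Prop where
  apply_apply : ∀ x, J (J x) = x
  inner_map_map : ∀ x y, ⟪J x, J y⟫_ℂ = ⟪y, x⟫_ℂ

namespace IsConjugation

variable {J : H →L⋆[ℂ] H} (hJ : IsConjugation J)
include hJ

lemma norm_map (x : H) : ‖J x‖ = ‖x‖ := by
  simp only [norm_eq_sqrt_re_inner (𝕜 := ℂ), hJ.inner_map_map]

lemma inner_map_left (x y : H) : ⟪J x, y⟫_ℂ = ⟪J y, x⟫_ℂ := by
  rw [← hJ.inner_map_map x (J y), hJ.apply_apply]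

end IsConjugation

/-- Complex conjugation of coordinates with respect to a Hilbert basis containing `ξ`. -/
lemma exists_isConjugation_map_eq_self [CompleteSpace H] {ξ : H} (hξ : ‖ξ‖ = 1) :
    ∃ J : H →L⋆[ℂ] H, IsConjugation J ∧ J ξ = ξ := by
  classical
  have horth : Orthonormal ℂ ((↑) : ({ξ} : Set H) → H) := by
    rw [orthonormal_iff_ite]
    rintro ⟨x, rfl⟩ ⟨y, rfl⟩
    simp [hξ]
  obtain ⟨w, b, hw, hb⟩ := horth.exists_hilbertBasis_extension
  let J₀ : H →ₛₗ[starRingEnd ℂ] H :=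
    { toFun := fun x => b.repr.symm (star (b.repr x))
      map_add' := fun x y => by simp
      map_smul' := fun c x => by simp [star_smul] }
  have hnorm : ∀ x, ‖J₀ x‖ ≤ 1 * ‖x‖ := fun x => by simp [J₀]
  refine ⟨J₀.mkContinuous 1 hnorm, ⟨fun x => by simp [J₀], fun x y => ?_⟩, ?_⟩
  · have hstar : ∀ f g : lp (fun _ : w => ℂ) 2, ⟪star f, star g⟫_ℂ = ⟪g, f⟫_ℂ := fun f g => by
      simp [lp.inner_eq_tsum, mul_comm]
    rw [← b.repr.inner_map_map y x, ← hstar]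
    exact b.repr.symm.inner_map_map _ _
  · have hξw : b ⟨ξ, hw rfl⟩ = ξ := by rw [hb]
    change b.repr.symm (star (b.repr ξ)) = ξ
    rw [LinearIsometryEquiv.symm_apply_eq, ← hξw, b.repr_self]
    ext i
    rcases eq_or_ne i ⟨ξ, hw rfl⟩ with rfl | hi
    · simp
    · simp [hi]

end Conjugations

section StarOrbits

open Filter Topology ContinuousLinearMap

variable {H : Type*} [NormedAddCommGroup H] [InnerProductSpace ℂ H] [CompleteSpace H]

/-- The graph of `a ω ↦ J a* ω'`: composing with `J` makes the antilinear relation `starOrbit`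
linear. -/
def starRelation (A : VonNeumannAlgebra H) (J : H →L⋆[ℂ] H) (ω ω' : H) : Submodule ℂ (H × H) :=
  (operators A).map ((apply ℂ H ω).toLinearMap.prod
    (J.toLinearMap ∘ₛₗ (apply ℂ H ω').toLinearMap ∘ₛₗ (starLinearEquiv ℂ).toLinearMap))

variable {A : VonNeumannAlgebra H} {J : H →L⋆[ℂ] H} {ω ω' : H} {δ : ℝ}

lemma mem_starRelation {z : H × H} :
    z ∈ starRelation A J ω ω' ↔ ∃ a ∈ A, (a ω, J (star a ω')) = z := Iff.rfl

/-- The counterpart of `regSource (starRelation A J ω ω')` for the commutant of `A`. -/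
def commutantSource (A : VonNeumannAlgebra H) (J : H →L⋆[ℂ] H) (ω ω' : H) (δ : ℝ) : H →L[ℂ] H :=
  cyclicProjection A ω' ∘L (J.comp ((regTarget (starRelation A J ω ω') δ).comp J))

lemma norm_commutantSource_le (hJ : IsConjugation J) : ‖commutantSource A J ω ω' δ‖ ≤ 1 := by
  refine opNorm_le_bound _ zero_le_one fun h => ?_
  calc ‖cyclicProjection A ω' (J (regTarget (starRelation A J ω ω') δ (J h)))‖
      ≤ 1 * (1 * ‖J h‖) := by
        refine (le_of_opNorm_le _ (norm_cyclicProjection_le A ω') _).trans ?_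
        rw [hJ.norm_map]
        gcongr
        exact le_of_opNorm_le _ norm_regTarget_le _
    _ = 1 * ‖h‖ := by rw [one_mul, hJ.norm_map]

lemma regSource_mem_closure_starOrbit (hJ : IsConjugation J) (hδ : δ ≠ 0) (h : H) :
    (regSource (starRelation A J ω ω') δ h, J (regOp (starRelation A J ω ω') δ h)) ∈
      closure (starOrbit A ω ω') := by
  refine map_mem_closure (f := Prod.map id J) (by fun_prop) (regSource_regOp_mem_closure hδ h) ?_
  rintro _ ⟨a, ha, rfl⟩
  exact ⟨a, ha, Prod.ext rfl (hJ.apply_apply _).symm⟩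

lemma commutantSource_mem_closure_starOrbit (hJ : IsConjugation J) (hδ : δ ≠ 0) (h : H) :
    (commutantSource A J ω ω' δ h, star (regOp (starRelation A J ω ω') δ) (J h)) ∈
      closure (starOrbit A.commutant ω ω') := by
  refine mem_closure_starOrbit_commutant (cyclicProjection_mem_closure A ω' _) ?_ fun a ha => ?_
  · refine closure_mono ?_ (adjoint_regOp_mem_closure_domain hδ (J h))
    rintro _ ⟨_, ⟨a, ha, rfl⟩, rfl⟩
    exact ⟨a, ha, rfl⟩
  · have hadj := sub_eq_zero.1 ((Submodule.mem_adjoint_iff _ _).1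
      (regTarget_adjoint_regOp_mem_adjoint hδ (J h)) (a ω) (J (star a ω'))
      (mem_starRelation.2 ⟨a, ha, rfl⟩))
    have hfix : cyclicProjection A ω' (star a ω') = star a ω' :=
      cyclicProjection_of_mem_closure (subset_closure (mem_orbit.2 ⟨star a, star_mem ha, rfl⟩))
    calc ⟪star (regOp (starRelation A J ω ω') δ) (J h), a ω⟫_ℂ
        = ⟪regTarget (starRelation A J ω ω') δ (J h), J (star a ω')⟫_ℂ := by
          rw [← inner_conj_symm, star_eq_adjoint, ← hadj, inner_conj_symm]
      _ = ⟪star a ω', J (regTarget (starRelation A J ω ω') δ (J h))⟫_ℂ := by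
          rw [← inner_conj_symm, hJ.inner_map_left, inner_conj_symm]
      _ = ⟪star a ω', commutantSource A J ω ω' δ h⟫_ℂ := by
          conv_lhs => rw [← hfix, ← star_cyclicProjection, star_eq_adjoint, adjoint_inner_left]
          rfl

lemma tendsto_regSource_starRelation {h : H} (hh : h ∈ closure (orbit A ω : Set H)) :
    Tendsto (fun δ => regSource (starRelation A J ω ω') δ h) (𝓝[≠] 0) (𝓝 h) := by
  refine tendsto_regSource (closure_mono ?_ hh)
  rintro _ ⟨a, ha, rfl⟩
  exact ⟨_, ⟨a, ha, rfl⟩, rfl⟩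

lemma tendsto_commutantSource (hJ : IsConjugation J) {h : H}
    (hh : h ∈ closure (orbit A.commutant ω : Set H)) :
    Tendsto (fun δ => commutantSource A J ω ω' δ h) (𝓝[≠] 0) (𝓝 (cyclicProjection A ω' h)) := by
  have hdom : J h ∈ closure (Prod.fst '' ((starRelation A J ω ω').adjoint : Set (H × H))) := by
    refine map_mem_closure J.continuous hh ?_
    rintro _ ⟨b, hb, rfl⟩
    refine ⟨(J (b ω), star b ω'), (Submodule.mem_adjoint_iff _ _).2 ?_, rfl⟩
    rintro _ _ ⟨a, ha, hz⟩
    obtain ⟨rfl, rfl⟩ := Prod.mk.inj hz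
    have hcomm := DFunLike.congr_fun
      (VonNeumannAlgebra.mem_commutant_iff.1 (star_mem hb) (star a) (star_mem ha)) ω'
    change ⟪J (star a ω'), J (b ω)⟫_ℂ - ⟪a ω, star b ω'⟫_ℂ = 0
    rw [hJ.inner_map_map, ← adjoint_inner_right, ← adjoint_inner_right, sub_eq_zero]
    exact congrArg (⟪ω, ·⟫_ℂ) hcomm.symm
  have hlim : Tendsto (fun δ => commutantSource A J ω ω' δ h) (𝓝[≠] 0)
      (𝓝 (cyclicProjection A ω' (J (J h)))) :=
    (((cyclicProjection A ω').continuous.comp J.continuous).tendsto _).comp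
      (tendsto_regTarget hdom)
  rwa [hJ.apply_apply] at hlim

end StarOrbits

section Extension

variable {E : Type*} [NormedAddCommGroup E] [InnerProductSpace ℂ E] {ι : Type*}

lemma inner_linearCombination (v : ι → E) (c d : ι →₀ ℂ) :
    ⟪Finsupp.linearCombination ℂ v c, Finsupp.linearCombination ℂ v d⟫_ℂ =
      c.sum fun i a => d.sum fun j b => star a * b * ⟪v i, v j⟫_ℂ := by
  rw [Finsupp.linearCombination_apply, Finsupp.linearCombination_apply, Finsupp.sum_inner]
  simp [Finsupp.inner_sum, mul_comm, mul_left_comm]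

lemma denseRange_linearCombination {v : ι → E}
    (hv : Dense (Submodule.span ℂ (Set.range v) : Set E)) :
    DenseRange (Finsupp.linearCombination ℂ v) := by
  rwa [DenseRange, ← LinearMap.coe_range, Finsupp.range_linearCombination]

variable [CompleteSpace E]

/-- A partially defined linear map extends to a bounded operator if its Gram matrix and that of a
defect map add up to a multiple of the original Gram matrix. -/
lemma exists_continuousLinearMap_of_inner {v w s : ι → E}
    (hv : Dense (Submodule.span ℂ (Set.range v) : Set E)) (M : ℝ)
    (h : ∀ i j, (M : ℂ) * ⟪v i, v j⟫_ℂ = ⟪w i, w j⟫_ℂ + ⟪s i, s j⟫_ℂ) :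
    ∃ T : E →L[ℂ] E, ∀ i, T (v i) = w i := by
  have hbound : ∀ c, ‖Finsupp.linearCombination ℂ w c‖ ≤
      √M * ‖Finsupp.linearCombination ℂ v c‖ := fun c => by
    have hgram : (M : ℂ) * ⟪Finsupp.linearCombination ℂ v c, Finsupp.linearCombination ℂ v c⟫_ℂ =
        ⟪Finsupp.linearCombination ℂ w c, Finsupp.linearCombination ℂ w c⟫_ℂ +
        ⟪Finsupp.linearCombination ℂ s c, Finsupp.linearCombination ℂ s c⟫_ℂ := by
      simp only [inner_linearCombination, Finsupp.sum, Finset.mul_sum, ← Finset.sum_add_distrib,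
        ← mul_add, ← h]
      exact Finset.sum_congr rfl fun i _ => Finset.sum_congr rfl fun j _ => mul_left_comm _ _ _
    simp only [inner_self_eq_norm_sq_to_K] at hgram
    have hsq : M * ‖Finsupp.linearCombination ℂ v c‖ ^ 2 =
        ‖Finsupp.linearCombination ℂ w c‖ ^ 2 + ‖Finsupp.linearCombination ℂ s c‖ ^ 2 := by
      apply Complex.ofReal_injective
      push_cast
      exact hgram
    rw [← Real.sqrt_sq (norm_nonneg (Finsupp.linearCombination ℂ v c)),
      ← Real.sqrt_mul' _ (sq_nonneg _), hsq]
    exact Real.le_sqrt_of_sq_le (le_add_of_nonneg_right (sq_nonneg _))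
  refine ⟨(Finsupp.linearCombination ℂ w).extendOfNorm (Finsupp.linearCombination ℂ v),
    fun i => ?_⟩
  simpa using LinearMap.extendOfNorm_eq (denseRange_linearCombination hv) ⟨_, hbound⟩
    (Finsupp.single i 1)

lemma exists_antilinearMap_of_inner {v w : ι → E}
    (hv : Dense (Submodule.span ℂ (Set.range v) : Set E))
    (h : ∀ i j, ⟪w i, w j⟫_ℂ = ⟪v j, v i⟫_ℂ) :
    ∃ J : E →L⋆[ℂ] E, (∀ i, J (v i) = w i) ∧ ∀ x y, ⟪J x, J y⟫_ℂ = ⟪y, x⟫_ℂ := by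
  let f : (ι →₀ ℂ) →ₛₗ[starRingEnd ℂ] E :=
    Finsupp.linearCombination ℂ w ∘ₛₗ
      Finsupp.mapRange.linearMap (starLinearEquiv ℂ : ℂ ≃ₗ⋆[ℂ] ℂ).toLinearMap
  have hinner : ∀ c d, ⟪f c, f d⟫_ℂ =
      ⟪Finsupp.linearCombination ℂ v d, Finsupp.linearCombination ℂ v c⟫_ℂ := fun c d => by
    change ⟪Finsupp.linearCombination ℂ w _, Finsupp.linearCombination ℂ w _⟫_ℂ = _
    rw [inner_linearCombination, inner_linearCombination, Finsupp.sum_comm]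
    simp [Finsupp.sum_mapRange_index, h, mul_comm]
  have hbound : ∀ c, ‖f c‖ ≤ 1 * ‖Finsupp.linearCombination ℂ v c‖ := fun c => by
    rw [one_mul, norm_eq_sqrt_re_inner (𝕜 := ℂ), norm_eq_sqrt_re_inner (𝕜 := ℂ), hinner]
  have hdense := denseRange_linearCombination hv
  have hf := LinearMap.extendOfNorm_eq hdense ⟨_, hbound⟩
  refine ⟨f.extendOfNorm (Finsupp.linearCombination ℂ v), fun i => ?_, fun x y => ?_⟩
  · simpa [f] using hf (Finsupp.single i 1)
  · refine hdense.induction_on₂ (isClosed_eq (by fun_prop) (by fun_prop)) (fun c d => ?_) x y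
    rw [hf, hf, hinner]

/-- Take `S` to be a square root of `‖T‖² - T* T`. -/
lemma exists_inner_add_inner_eq (T : E →L[ℂ] E) : ∃ S : E →L[ℂ] E, ∀ x y,
    ((‖T‖ ^ 2 : ℝ) : ℂ) * ⟪x, y⟫_ℂ = ⟪T x, T y⟫_ℂ + ⟪S x, S y⟫_ℂ := by
  obtain ⟨S, hS⟩ := CStarAlgebra.nonneg_iff_eq_star_mul_self.1
    (sub_nonneg.2 (CStarAlgebra.star_mul_le_algebraMap_norm_sq (a := T)))
  refine ⟨S, fun x y => ?_⟩
  have hsum : (‖T‖ ^ 2 : ℝ) • y = star T (T y) + star S (S y) := by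
    have := DFunLike.congr_fun (sub_eq_iff_eq_add'.1 hS) y
    rwa [Algebra.algebraMap_eq_smul_one] at this
  rw [← ContinuousLinearMap.adjoint_inner_right, ← ContinuousLinearMap.adjoint_inner_right,
    ← inner_add_right, ← ContinuousLinearMap.star_eq_adjoint, ← ContinuousLinearMap.star_eq_adjoint,
    ← hsum, ← Complex.coe_smul, inner_smul_right]

end Extension

section InfiniteTensorProduct

section Combinatorics

variable {H : ℕ → Type*} {E : Type*} {ξ : ∀ i, H i} {tp : (n : ℕ) → ((i : Fin n) → H i) → E}

/-- The simple tensor `x₀ ⊗ ⋯ ⊗ xₙ₋₁ ⊗ ξₙ ⊗ ξₙ₊₁ ⊗ ⋯`, for a sequence `x` of which only the first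
`n` terms matter. -/
def simpleTensor (tp : (n : ℕ) → ((i : Fin n) → H i) → E) (n : ℕ) (x : ∀ i, H i) : E :=
  tp n fun i => x i

/-- The sequence that agrees with `x` on the first `n` terms and with `ξ` from then on. -/
def truncate (ξ : ∀ i, H i) (n : ℕ) (x : ∀ i, H i) : ∀ i, H i := fun i => if i < n then x i else ξ i

lemma truncate_of_lt {n i : ℕ} (hi : i < n) (x : ∀ i, H i) : truncate ξ n x i = x i := if_pos hi

lemma truncate_of_le {n i : ℕ} (hi : n ≤ i) (x : ∀ i, H i) : truncate ξ n x i = ξ i :=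
  if_neg hi.not_gt

lemma truncate_update {n i : ℕ} (hi : i < n) (x : ∀ i, H i) (u : H i) :
    truncate ξ n (Function.update x i u) = Function.update (truncate ξ n x) i u := by
  ext j
  rcases eq_or_ne j i with rfl | hj
  · simp [truncate, hi]
  · simp [truncate, hj]

lemma simpleTensor_congr {n : ℕ} {x y : ∀ i, H i} (h : ∀ i < n, x i = y i) :
    simpleTensor tp n x = simpleTensor tp n y :=
  congrArg (tp n) (funext fun i => h i i.2)

lemma simpleTensor_update (n : ℕ) (x : ∀ i, H i) {i : ℕ} (hi : i < n) (u : H i) :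
    simpleTensor tp n (Function.update x i u) =
      tp n (Function.update (fun j : Fin n => x j) ⟨i, hi⟩ u) := by
  refine congrArg (tp n) (funext fun j => ?_)
  rcases eq_or_ne j ⟨i, hi⟩ with rfl | hj
  · simp
  · rw [Function.update_of_ne hj, Function.update_of_ne fun h => hj (Fin.ext h)]

lemma exists_simpleTensor_eq (ξ : ∀ i, H i) (n : ℕ) (x : (i : Fin n) → H i) :
    ∃ y, simpleTensor tp n y = tp n x :=
  ⟨fun i => if h : i < n then x ⟨i, h⟩ else ξ i, congrArg (tp n) (funext fun i => by simp)⟩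

end Combinatorics

variable {H : ℕ → Type*} [∀ i, NormedAddCommGroup (H i)] [∀ i, InnerProductSpace ℂ (H i)]
  {E : Type*} [NormedAddCommGroup E] [InnerProductSpace ℂ E]
  {ξ : ∀ i, H i} {tp : (n : ℕ) → ((i : Fin n) → H i) → E}

/-- `E` is the infinite tensor product of the spaces `H i` along the unit vectors `ξ i`, with
`tp n (x₀, …, xₙ₋₁) = x₀ ⊗ ⋯ ⊗ xₙ₋₁ ⊗ ξₙ ⊗ ξₙ₊₁ ⊗ ⋯`. -/
structure IsInfiniteTensorProduct (ξ : ∀ i, H i) (tp : (n : ℕ) → ((i : Fin n) → H i) → E) :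
    Prop where
  norm_eq_one : ∀ i, ‖ξ i‖ = 1
  map_update_smul_add : ∀ (n : ℕ) (x : (i : Fin n) → H i) (i : Fin n) (u v : H i) (c : ℂ),
    tp n (Function.update x i (c • u + v)) =
      c • tp n (Function.update x i u) + tp n (Function.update x i v)
  inner_map_map : ∀ (n : ℕ) (x y : (i : Fin n) → H i), ⟪tp n x, tp n y⟫_ℂ = ∏ i, ⟪x i, y i⟫_ℂ
  map_snoc : ∀ (n : ℕ) (x : (i : Fin n) → H i), tp (n + 1) (Fin.snoc x (ξ n)) = tp n x
  dense_span : Dense (Submodule.span ℂ (⋃ n : ℕ, Set.range (tp n)) : Set E)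

namespace IsInfiniteTensorProduct

variable (K : IsInfiniteTensorProduct ξ tp)
include K

lemma inner_simpleTensor (n : ℕ) (x y : ∀ i, H i) :
    ⟪simpleTensor tp n x, simpleTensor tp n y⟫_ℂ = ∏ i ∈ Finset.range n, ⟪x i, y i⟫_ℂ := by
  rw [simpleTensor, simpleTensor, K.inner_map_map, Finset.prod_range]

lemma simpleTensor_truncate {n m : ℕ} (hnm : n ≤ m) (x : ∀ i, H i) :
    simpleTensor tp m (truncate ξ n x) = simpleTensor tp n x := by
  induction m, hnm using Nat.le_induction with
  | base => exact simpleTensor_congr fun i hi => truncate_of_lt hi x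
  | succ m hm ih =>
    have hsnoc : (fun i : Fin (m + 1) => truncate ξ n x i) =
        Fin.snoc (fun i : Fin m => truncate ξ n x i) (ξ m) := by
      funext i
      induction i using Fin.lastCases with
      | last => simp [truncate_of_le hm]
      | cast i => simp
    exact (congrArg (tp (m + 1)) hsnoc).trans ((K.map_snoc m _).trans ih)

/-- The simple tensors of length `n` as a multilinear map. -/
def multilinearMap (n : ℕ) : MultilinearMap ℂ (fun i : Fin n => H i) E where
  toFun := tp n
  map_update_add' {inst} x i u v := by
    rw [Subsingleton.elim inst fun a b => instDecidableEqFin n a b]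
    simpa using K.map_update_smul_add n x i u v 1
  map_update_smul' {inst} x i c u := by
    rw [Subsingleton.elim inst fun a b => instDecidableEqFin n a b]
    have hzero := K.map_update_smul_add n x i 0 0 1
    simp only [smul_zero, add_zero, one_smul, left_eq_add] at hzero
    simpa [hzero] using K.map_update_smul_add n x i u 0 c

lemma continuous_simpleTensor (n : ℕ) : Continuous (simpleTensor tp n) := by
  have hnorm : ∀ x, ‖K.multilinearMap n x‖ ≤ 1 * ∏ i, ‖x i‖ := fun x => by
    have hsq : ‖tp n x‖ ^ 2 = (∏ i, ‖x i‖) ^ 2 := by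
      apply Complex.ofReal_injective
      have := K.inner_map_map n x x
      simp only [inner_self_eq_norm_sq_to_K] at this
      rw [← Finset.prod_pow]
      push_cast
      exact this
    rw [one_mul]
    exact ((sq_eq_sq₀ (norm_nonneg _) (Finset.prod_nonneg fun _ _ => norm_nonneg _)).1 hsq).le
  exact ((K.multilinearMap n).mkContinuous 1 hnorm).cont.comp (by fun_prop)

lemma simpleTensor_update_add (n : ℕ) (x : ∀ i, H i) {i : ℕ} (hi : i < n) (u v : H i) :
    simpleTensor tp n (Function.update x i (u + v)) =
      simpleTensor tp n (Function.update x i u) + simpleTensor tp n (Function.update x i v) := by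
  simp only [simpleTensor_update _ _ hi]
  exact (K.multilinearMap n).map_update_add _ ⟨i, hi⟩ u v

lemma simpleTensor_update_smul (n : ℕ) (x : ∀ i, H i) {i : ℕ} (hi : i < n) (c : ℂ) (u : H i) :
    simpleTensor tp n (Function.update x i (c • u)) =
      c • simpleTensor tp n (Function.update x i u) := by
  simp only [simpleTensor_update _ _ hi]
  exact (K.multilinearMap n).map_update_smul _ ⟨i, hi⟩ c u

lemma inner_simpleTensor_update {n i : ℕ} (hi : i < n) (x y : ∀ i, H i) (u v : H i) :
    ⟪simpleTensor tp n (Function.update x i u), simpleTensor tp n (Function.update y i v)⟫_ℂ =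
      ⟪u, v⟫_ℂ * ∏ j ∈ (Finset.range n).erase i, ⟪x j, y j⟫_ℂ := by
  rw [K.inner_simpleTensor, ← Finset.mul_prod_erase _ _ (Finset.mem_range.2 hi)]
  simp only [Function.update_self]
  congr 1
  refine Finset.prod_congr rfl fun j hj => ?_
  rw [Function.update_of_ne (Finset.ne_of_mem_erase hj),
    Function.update_of_ne (Finset.ne_of_mem_erase hj)]

lemma dense_span_simpleTensor (n₀ : ℕ) :
    Dense (Submodule.span ℂ {z | ∃ n x, n₀ ≤ n ∧ simpleTensor tp n x = z} : Set E) := by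
  refine K.dense_span.mono (Submodule.span_mono ?_)
  rintro _ hz
  obtain ⟨n, x, rfl⟩ := Set.mem_iUnion.1 hz
  obtain ⟨y, hy⟩ := exists_simpleTensor_eq (tp := tp) ξ n x
  exact ⟨max n n₀, truncate ξ n y, le_max_right _ _,
    (K.simpleTensor_truncate (le_max_left _ _) y).trans hy⟩

lemma ext_simpleTensor {σ : ℂ →+* ℂ} (n₀ : ℕ) {S T : E →SL[σ] E}
    (h : ∀ n x, n₀ ≤ n → S (simpleTensor tp n x) = T (simpleTensor tp n x)) : S = T := by
  refine ContinuousLinearMap.ext_on (K.dense_span_simpleTensor n₀) ?_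
  rintro _ ⟨n, x, hn, rfl⟩
  exact h n x hn

lemma ext_inner_simpleTensor (n₀ : ℕ) {u v : E}
    (h : ∀ n x, n₀ ≤ n → ⟪simpleTensor tp n x, u⟫_ℂ = ⟪simpleTensor tp n x, v⟫_ℂ) : u = v := by
  have := ContinuousLinearMap.ext_on (f := innerSL ℂ u) (g := innerSL ℂ v)
    (K.dense_span_simpleTensor n₀) (by
      rintro _ ⟨n, x, hn, rfl⟩
      simpa using congrArg (starRingEnd ℂ) (h n x hn))
  exact (innerSL_inj (𝕜 := ℂ)).1 this

end IsInfiniteTensorProduct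

end InfiniteTensorProduct

section SiteOperators

open ContinuousLinearMap

variable {H : ℕ → Type*} [∀ i, NormedAddCommGroup (H i)] [∀ i, InnerProductSpace ℂ (H i)]
  {E : Type*} [NormedAddCommGroup E] [InnerProductSpace ℂ E]
  {ξ : ∀ i, H i} {tp : (n : ℕ) → ((i : Fin n) → H i) → E}

namespace IsInfiniteTensorProduct

variable (K : IsInfiniteTensorProduct ξ tp)
include K

lemma exists_inner_simpleTensor_update {i m n : ℕ} (hm : i < m) (hn : i < n) (x y : ∀ i, H i) :
    ∃ c : ℂ, ∀ u v, ⟪simpleTensor tp m (Function.update x i u),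
      simpleTensor tp n (Function.update y i v)⟫_ℂ = ⟪u, v⟫_ℂ * c := by
  refine ⟨∏ j ∈ (Finset.range (max m n)).erase i, ⟪truncate ξ m x j, truncate ξ n y j⟫_ℂ,
    fun u v => ?_⟩
  rw [← K.simpleTensor_truncate (le_max_left m n), ← K.simpleTensor_truncate (le_max_right m n),
    truncate_update hm, truncate_update hn, K.inner_simpleTensor_update (lt_max_of_lt_left hm)]

variable [∀ i, CompleteSpace (H i)] [CompleteSpace E]

lemma exists_apply_simpleTensor_eq_update (i : ℕ) (T : H i →L[ℂ] H i) : ∃ P : E →L[ℂ] E,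
    ∀ m x, i < m → P (simpleTensor tp m x) = simpleTensor tp m (Function.update x i (T (x i))) := by
  let ι := {p : ℕ × (∀ i, H i) // i < p.1}
  let w : (H i →L[ℂ] H i) → ι → E :=
    fun T p => simpleTensor tp p.1.1 (Function.update p.1.2 i (T (p.1.2 i)))
  have hdense : Dense (Submodule.span ℂ (Set.range (w 1)) : Set E) := by
    refine (K.dense_span_simpleTensor (i + 1)).mono (Submodule.span_mono ?_)
    rintro _ ⟨m, x, hm, rfl⟩
    exact ⟨⟨(m, x), hm⟩, by simp [w]⟩
  obtain ⟨S, hS⟩ := exists_inner_add_inner_eq T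
  obtain ⟨P, hP⟩ := exists_continuousLinearMap_of_inner (w := w T) (s := w S) hdense (‖T‖ ^ 2)
    (by
      rintro ⟨⟨m, x⟩, hm⟩ ⟨⟨n, y⟩, hn⟩
      obtain ⟨c, hc⟩ := K.exists_inner_simpleTensor_update hm hn x y
      simp only [w, hc, ← add_mul, ← hS, mul_assoc, one_apply_eq_self])
  exact ⟨P, fun m x hm => by simpa [w] using hP ⟨(m, x), hm⟩⟩

lemma exists_starAlgHom_apply_simpleTensor (i : ℕ) :
    ∃ φ : (H i →L[ℂ] H i) →⋆ₐ[ℂ] (E →L[ℂ] E), ∀ T m x, i < m →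
      φ T (simpleTensor tp m x) = simpleTensor tp m (Function.update x i (T (x i))) := by
  choose φ hφ using K.exists_apply_simpleTensor_eq_update i
  refine ⟨{ toFun := φ
            map_one' := K.ext_simpleTensor (i + 1) fun m x hm => ?_
            map_mul' := fun S T => K.ext_simpleTensor (i + 1) fun m x hm => ?_
            map_zero' := K.ext_simpleTensor (i + 1) fun m x hm => ?_
            map_add' := fun S T => K.ext_simpleTensor (i + 1) fun m x hm => ?_
            commutes' := fun c => K.ext_simpleTensor (i + 1) fun m x hm => ?_
            map_star' := fun T => K.ext_simpleTensor (i + 1) fun m x hm =>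
              K.ext_inner_simpleTensor (i + 1) fun n y hn => ?_ }, hφ⟩
  · simp [hφ 1 m x hm]
  · simp [hφ _ m _ hm]
  · simpa [hφ 0 m x hm] using K.simpleTensor_update_smul m x hm 0 0
  · simp [hφ _ m x hm, K.simpleTensor_update_add m x hm]
  · rw [hφ _ m x hm]
    simpa [Algebra.algebraMap_eq_smul_one] using K.simpleTensor_update_smul m x hm c (x i)
  · obtain ⟨c, hc⟩ := K.exists_inner_simpleTensor_update hn hm y x
    have hleft := hc (y i) (star T (x i))
    have hright := hc (T (y i)) (x i)
    rw [Function.update_eq_self] at hleft hright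
    rw [star_eq_adjoint (φ T), adjoint_inner_right, hφ _ m x hm, hφ _ n y hn, hleft, hright,
      star_eq_adjoint, adjoint_inner_right]

/-- The operator `1 ⊗ ⋯ ⊗ 1 ⊗ T ⊗ 1 ⊗ ⋯` acting on the `i`-th tensor factor. -/
def site (i : ℕ) : (H i →L[ℂ] H i) →⋆ₐ[ℂ] (E →L[ℂ] E) :=
  (K.exists_starAlgHom_apply_simpleTensor i).choose

lemma site_simpleTensor {i m : ℕ} (hi : i < m) (T : H i →L[ℂ] H i) (x : ∀ i, H i) :
    K.site i T (simpleTensor tp m x) = simpleTensor tp m (Function.update x i (T (x i))) :=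
  (K.exists_starAlgHom_apply_simpleTensor i).choose_spec T m x hi

lemma norm_site_le (i : ℕ) (T : H i →L[ℂ] H i) : ‖K.site i T‖ ≤ ‖T‖ :=
  NonUnitalStarAlgHom.norm_apply_le (K.site i) T

lemma commute_site {i j : ℕ} (hij : i ≠ j) (S : H i →L[ℂ] H i) (T : H j →L[ℂ] H j) :
    Commute (K.site i S) (K.site j T) := by
  refine K.ext_simpleTensor (max i j + 1) fun m x hm => ?_
  have hi : i < m := by omega
  have hj : j < m := by omega
  rw [mul_apply_eq_comp, mul_apply_eq_comp, K.site_simpleTensor hj, K.site_simpleTensor hi,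
    K.site_simpleTensor hi, K.site_simpleTensor hj, Function.update_of_ne hij,
    Function.update_of_ne hij.symm, Function.update_comm hij]

/-- The operator `T₀ ⊗ ⋯ ⊗ Tₙ₋₁ ⊗ 1 ⊗ 1 ⊗ ⋯`. -/
def siteProd (T : ∀ i, H i →L[ℂ] H i) : ℕ → (E →L[ℂ] E)
  | 0 => 1
  | n + 1 => siteProd T n * K.site n (T n)

lemma siteProd_one (n : ℕ) : K.siteProd (fun _ => 1) n = 1 := by
  induction n with
  | zero => rfl
  | succ n ih => rw [siteProd, ih, map_one, one_mul]

lemma siteProd_simpleTensor_of_le {n m : ℕ} (hnm : n ≤ m) (T : ∀ i, H i →L[ℂ] H i)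
    (x : ∀ i, H i) : K.siteProd T n (simpleTensor tp m x) =
      simpleTensor tp m fun i => if i < n then T i (x i) else x i := by
  induction n generalizing x with
  | zero => simp [siteProd]
  | succ n ih =>
    rw [siteProd, mul_apply_eq_comp, K.site_simpleTensor hnm, ih (by omega)]
    refine simpleTensor_congr fun i _ => ?_
    rcases eq_or_ne i n with rfl | hin
    · simp
    · simp only [Function.update_of_ne hin, Nat.lt_succ_iff_lt_or_eq, hin, or_false]

lemma siteProd_simpleTensor (T : ∀ i, H i →L[ℂ] H i) (n : ℕ) (x : ∀ i, H i) :
    K.siteProd T n (simpleTensor tp n x) = simpleTensor tp n fun i => T i (x i) := by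
  rw [K.siteProd_simpleTensor_of_le le_rfl]
  exact simpleTensor_congr fun i hi => if_pos hi

lemma norm_siteProd_le {T : ∀ i, H i →L[ℂ] H i} (hT : ∀ i, ‖T i‖ ≤ 1) (n : ℕ) :
    ‖K.siteProd T n‖ ≤ 1 := by
  induction n with
  | zero => exact norm_id_le
  | succ n ih =>
    exact (norm_mul_le _ _).trans
      (mul_le_one₀ ih (norm_nonneg _) ((K.norm_site_le _ _).trans (hT n)))

lemma commute_siteProd {n : ℕ} {T : ∀ i, H i →L[ℂ] H i} {x : E →L[ℂ] E}
    (h : ∀ i < n, Commute (K.site i (T i)) x) : Commute (K.siteProd T n) x := by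
  induction n with
  | zero => exact Commute.one_left x
  | succ n ih => exact (ih fun i hi => h i (by omega)).mul_left (h n (by omega))

lemma siteProd_mul (S T : ∀ i, H i →L[ℂ] H i) (n : ℕ) :
    K.siteProd (fun i => S i * T i) n = K.siteProd S n * K.siteProd T n := by
  induction n with
  | zero => simp [siteProd]
  | succ n ih =>
    have hcomm : Commute (K.siteProd T n) (K.site n (S n)) :=
      K.commute_siteProd fun i hi => K.commute_site (by omega) _ _
    simp only [siteProd, ih, map_mul]
    rw [mul_assoc, ← mul_assoc (K.siteProd T n), hcomm.eq]
    simp only [mul_assoc]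

lemma star_siteProd (T : ∀ i, H i →L[ℂ] H i) (n : ℕ) :
    star (K.siteProd T n) = K.siteProd (fun i => star (T i)) n := by
  induction n with
  | zero => simp [siteProd]
  | succ n ih =>
    simp only [siteProd, star_mul, ih, ← map_star]
    exact (K.commute_siteProd fun i hi => K.commute_site (by omega) _ _).symm.eq

end IsInfiniteTensorProduct

end SiteOperators

section InitialFactors

open Filter Topology ContinuousLinearMap

variable {H : ℕ → Type*} [∀ i, NormedAddCommGroup (H i)] [∀ i, InnerProductSpace ℂ (H i)]
  {E : Type*} [NormedAddCommGroup E] [InnerProductSpace ℂ E]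
  {ξ : ∀ i, H i} {tp : (n : ℕ) → ((i : Fin n) → H i) → E}

namespace IsInfiniteTensorProduct

variable (K : IsInfiniteTensorProduct ξ tp)

/-- The closed subspace `H₀ ⊗ ⋯ ⊗ Hₙ₋₁ ⊗ ξₙ ⊗ ξₙ₊₁ ⊗ ⋯`. -/
def initial (_ : IsInfiniteTensorProduct ξ tp) (n : ℕ) : Submodule ℂ E :=
  (Submodule.span ℂ (Set.range (simpleTensor tp n))).topologicalClosure

instance [CompleteSpace E] (n : ℕ) : CompleteSpace (K.initial n) :=
  (Submodule.isClosed_topologicalClosure _).completeSpace_coe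

lemma simpleTensor_mem_initial (n : ℕ) (x : ∀ i, H i) : simpleTensor tp n x ∈ K.initial n :=
  Submodule.le_topologicalClosure _ (Submodule.subset_span ⟨x, rfl⟩)

lemma initial_mono : Monotone K.initial := by
  refine fun n m hnm => Submodule.topologicalClosure_mono (Submodule.span_mono ?_)
  rintro _ ⟨x, rfl⟩
  exact ⟨truncate ξ n x, K.simpleTensor_truncate hnm x⟩

lemma map_eq_map_of_mem_initial {F : Type*} [NormedAddCommGroup F] [NormedSpace ℂ F] {n : ℕ}
    {S T : E →L[ℂ] F} (h : ∀ x, S (simpleTensor tp n x) = T (simpleTensor tp n x)) {z : E}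
    (hz : z ∈ K.initial n) : S z = T z := by
  refine ContinuousLinearMap.eqOn_closure_span (s := Set.range (simpleTensor tp n)) ?_ hz
  rintro _ ⟨x, rfl⟩
  exact h x

lemma eq_of_forall_inner_simpleTensor {n : ℕ} {u v : E} (hu : u ∈ K.initial n)
    (hv : v ∈ K.initial n)
    (h : ∀ x, ⟪u, simpleTensor tp n x⟫_ℂ = ⟪v, simpleTensor tp n x⟫_ℂ) : u = v := by
  have hinner : ⟪u, u - v⟫_ℂ = ⟪v, u - v⟫_ℂ :=
    K.map_eq_map_of_mem_initial (S := innerSL ℂ u) (T := innerSL ℂ v) h (sub_mem hu hv)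
  rwa [← sub_eq_zero, ← inner_sub_left, inner_self_eq_zero, sub_eq_zero] at hinner

lemma map_mem_initial {n : ℕ} {T : E →L[ℂ] E} (h : ∀ x, T (simpleTensor tp n x) ∈ K.initial n)
    {z : E} (hz : z ∈ K.initial n) : T z ∈ K.initial n := by
  refine Submodule.topologicalClosure_minimal (t := (K.initial n).comap T.toLinearMap) _
    (Submodule.span_le.2 ?_) ((Submodule.isClosed_topologicalClosure _).preimage T.continuous) hz
  rintro _ ⟨x, rfl⟩
  exact h x

variable [CompleteSpace E]

/-- The orthogonal projection onto `H₀ ⊗ ⋯ ⊗ Hₙ₋₁ ⊗ ξₙ ⊗ ξₙ₊₁ ⊗ ⋯`. -/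
def initialProjection (n : ℕ) : E →L[ℂ] E := (K.initial n).starProjection

lemma initialProjection_mem (n : ℕ) (z : E) : K.initialProjection n z ∈ K.initial n :=
  Submodule.starProjection_apply_mem _ _

lemma initialProjection_of_mem {n : ℕ} {z : E} (hz : z ∈ K.initial n) :
    K.initialProjection n z = z :=
  Submodule.starProjection_eq_self_iff.2 hz

lemma mem_initial_of_commute {n : ℕ} {x : E →L[ℂ] E} (hx : Commute x (K.initialProjection n))
    {z : E} (hz : z ∈ K.initial n) : x z ∈ K.initial n := by
  have hfix : x (K.initialProjection n z) = K.initialProjection n (x z) :=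
    DFunLike.congr_fun hx.eq z
  rw [K.initialProjection_of_mem hz] at hfix
  exact hfix ▸ K.initialProjection_mem n (x z)

lemma initialProjection_mul_self (n : ℕ) :
    K.initialProjection n * K.initialProjection n = K.initialProjection n := by
  ext z
  exact K.initialProjection_of_mem (K.initialProjection_mem n z)

lemma tendsto_initialProjection (z : E) :
    Tendsto (fun n => K.initialProjection n z) atTop (𝓝 z) := by
  refine Submodule.starProjection_tendsto_self K.initial K.initial_mono z ?_
  rw [top_le_iff, ← Submodule.dense_iff_topologicalClosure_eq_top]
  refine (K.dense_span_simpleTensor 0).mono (Submodule.span_le.2 ?_)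
  rintro _ ⟨m, x, -, rfl⟩
  exact Submodule.mem_iSup_of_mem m (K.simpleTensor_mem_initial m x)

lemma commute_of_forall_commute_compression {x y : E →L[ℂ] E}
    (h : ∀ n, Commute (K.initialProjection n * x * K.initialProjection n)
      (K.initialProjection n * y * K.initialProjection n)) : Commute x y := by
  have htendsto : ∀ {u : ℕ → E} {v : E}, Tendsto u atTop (𝓝 v) →
      Tendsto (fun n => K.initialProjection n (u n)) atTop (𝓝 v) := fun {u v} hu => by
    have hzero : Tendsto (fun n => K.initialProjection n (u n - v)) atTop (𝓝 0) :=
      squeeze_zero_norm (fun n => Submodule.norm_starProjection_apply_le _ _)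
        (tendsto_iff_norm_sub_tendsto_zero.1 hu)
    simpa using hzero.add (K.tendsto_initialProjection v)
  have hcompression : ∀ (x y : E →L[ℂ] E) (z : E), Tendsto (fun n =>
      (K.initialProjection n * x * K.initialProjection n *
        (K.initialProjection n * y * K.initialProjection n)) z) atTop (𝓝 (x (y z))) :=
    fun x y z => htendsto <| (x.continuous.tendsto _).comp <| htendsto <| htendsto <|
      (y.continuous.tendsto _).comp <| htendsto tendsto_const_nhds
  ext z
  refine tendsto_nhds_unique (hcompression x y z) ?_
  simp only [(h _).eq]
  exact hcompression y x z

lemma mul_initialProjection_eq {n : ℕ} {S T : E →L[ℂ] E}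
    (h : ∀ x, S (simpleTensor tp n x) = T (simpleTensor tp n x)) :
    S * K.initialProjection n = T * K.initialProjection n := by
  ext z
  exact K.map_eq_map_of_mem_initial h (K.initialProjection_mem n z)

include K in
lemma exists_isConjugation_simpleTensor {J : ∀ i, H i →L⋆[ℂ] H i} (hJ : ∀ i, IsConjugation (J i))
    (hJξ : ∀ i, J i (ξ i) = ξ i) : ∃ J' : E →L⋆[ℂ] E, IsConjugation J' ∧
      ∀ m x, J' (simpleTensor tp m x) = simpleTensor tp m fun i => J i (x i) := by
  let v : ℕ × (∀ i, H i) → E := fun p => simpleTensor tp p.1 p.2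
  let w : ℕ × (∀ i, H i) → E := fun p => simpleTensor tp p.1 fun i => J i (p.2 i)
  have hdense : Dense (Submodule.span ℂ (Set.range v) : Set E) := by
    refine (K.dense_span_simpleTensor 0).mono (Submodule.span_mono ?_)
    rintro _ ⟨m, x, -, rfl⟩
    exact ⟨(m, x), rfl⟩
  have htrunc : ∀ n x, (fun i => J i (truncate ξ n x i)) = truncate ξ n fun i => J i (x i) :=
    fun n x => by
      ext i
      simp only [truncate]
      split_ifs
      · rfl
      · exact hJξ i
  have hinner : ∀ p q, ⟪w p, w q⟫_ℂ = ⟪v q, v p⟫_ℂ := by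
    rintro ⟨m, x⟩ ⟨n, y⟩
    simp only [v, w]
    rw [← K.simpleTensor_truncate (le_max_left m n), ← K.simpleTensor_truncate (le_max_right m n),
      ← K.simpleTensor_truncate (le_max_left m n) x, ← K.simpleTensor_truncate (le_max_right m n) y,
      ← htrunc, ← htrunc, K.inner_simpleTensor, K.inner_simpleTensor]
    exact Finset.prod_congr rfl fun i _ => (hJ i).inner_map_map _ _
  obtain ⟨J', hJ', hJ'inner⟩ := exists_antilinearMap_of_inner hdense hinner
  have htensor : ∀ m x, J' (simpleTensor tp m x) = simpleTensor tp m fun i => J i (x i) :=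
    fun m x => hJ' (m, x)
  have hinvol : J'.comp J' = .id ℂ E := K.ext_simpleTensor 0 fun m x _ => by
    simp [htensor, (hJ _).apply_apply]
  exact ⟨J', ⟨DFunLike.congr_fun hinvol, hJ'inner⟩, htensor⟩

variable [∀ i, CompleteSpace (H i)]

lemma commute_site_initialProjection {i n : ℕ} (hi : i < n) (T : H i →L[ℂ] H i) :
    Commute (K.site i T) (K.initialProjection n) := by
  have hinv : ∀ S : H i →L[ℂ] H i, ∀ z ∈ K.initial n, K.site i S z ∈ K.initial n :=
    fun S z hz => K.map_mem_initial
      (fun x => by rw [K.site_simpleTensor hi]; exact K.simpleTensor_mem_initial _ _) hz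
  exact commute_starProjection (hinv T) (map_star (K.site i) T ▸ hinv (star T))

lemma commute_siteProd_initialProjection (T : ∀ i, H i →L[ℂ] H i) (n : ℕ) :
    Commute (K.siteProd T n) (K.initialProjection n) :=
  K.commute_siteProd fun _ hi => K.commute_site_initialProjection hi _

lemma tendsto_siteProd {ι : Type*} {l : Filter ι} {C : ι → ∀ i, H i →L[ℂ] H i}
    {T : ∀ i, H i →L[ℂ] H i} (hC : ∀ d i, ‖C d i‖ ≤ 1)
    (hlim : ∀ i h, Tendsto (fun d => C d i h) l (𝓝 (T i h))) (n : ℕ) (z : E) :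
    Tendsto (fun d => K.siteProd (C d) n z) l (𝓝 (K.siteProd T n z)) := by
  refine tendsto_of_mem_closure_of_norm_le_one (fun d => K.norm_siteProd_le (hC d) n)
    (fun z hz => ?_) (K.dense_span_simpleTensor n z)
  induction hz using Submodule.span_induction with
  | mem z hz =>
    obtain ⟨m, x, hm, rfl⟩ := hz
    simp only [K.siteProd_simpleTensor_of_le hm]
    refine ((K.continuous_simpleTensor m).tendsto _).comp (tendsto_pi_nhds.2 fun i => ?_)
    split_ifs
    · exact hlim i (x i)
    · exact tendsto_const_nhds
  | zero => simpa using tendsto_const_nhds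
  | add u v _ _ hu hv => simpa using hu.add hv
  | smul c u _ hu => simpa using hu.const_smul c

end IsInfiniteTensorProduct

end InitialFactors

section UngradedCommutation

open Filter Topology ContinuousLinearMap

variable {H : ℕ → Type*} [∀ i, NormedAddCommGroup (H i)] [∀ i, InnerProductSpace ℂ (H i)]
  [∀ i, CompleteSpace (H i)] {E : Type*} [NormedAddCommGroup E] [InnerProductSpace ℂ E]
  [CompleteSpace E] {ξ : ∀ i, H i} {tp : (n : ℕ) → ((i : Fin n) → H i) → E}

namespace IsInfiniteTensorProduct

variable (K : IsInfiniteTensorProduct ξ tp) {A : ∀ i, VonNeumannAlgebra (H i)} {n : ℕ}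
  {x y : E →L[ℂ] E}

/-- For `u i = aᵢ ωᵢ` and `v i = aᵢ* ω'ᵢ` both sides equal `⟪x (⨂ aᵢ ωᵢ), ⨂ ω'ᵢ⟫`. -/
lemma inner_simpleTensor_star_apply (hx : ∀ i < n, ∀ a ∈ A i, Commute (K.site i a) x)
    {ω ω' u v : ∀ i, H i} (huv : ∀ i, (u i, v i) ∈ closure (starOrbit (A i) (ω i) (ω' i))) :
    ⟪simpleTensor tp n u, star x (simpleTensor tp n ω')⟫_ℂ =
      ⟪x (simpleTensor tp n ω), simpleTensor tp n v⟫_ℂ := by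
  have hclosed : IsClosed {z : ∀ i, H i × H i |
      ⟪simpleTensor tp n (fun i => (z i).1), star x (simpleTensor tp n ω')⟫_ℂ =
        ⟪x (simpleTensor tp n ω), simpleTensor tp n fun i => (z i).2⟫_ℂ} := by
    have hcont := K.continuous_simpleTensor n
    exact isClosed_eq ((hcont.comp (by fun_prop)).inner continuous_const)
      (continuous_const.inner (hcont.comp (by fun_prop)))
  have hmem : (fun i => (u i, v i)) ∈
      closure (Set.univ.pi fun i => starOrbit (A i) (ω i) (ω' i)) := by
    rw [closure_pi_set]
    exact fun i _ => huv i
  refine hclosed.closure_subset_iff.2 (fun z hz => ?_) hmem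
  choose a ha hza using fun i => hz i (Set.mem_univ i)
  obtain rfl : (fun i => (a i (ω i), star (a i) (ω' i))) = z := funext hza
  have hcomm : K.siteProd a n (x (simpleTensor tp n ω)) =
      x (K.siteProd a n (simpleTensor tp n ω)) :=
    DFunLike.congr_fun (K.commute_siteProd fun i hi => hx i hi _ (ha i)).eq _
  change ⟪simpleTensor tp n fun i => a i (ω i), _⟫_ℂ =
    ⟪_, simpleTensor tp n fun i => star (a i) (ω' i)⟫_ℂ
  rw [← K.siteProd_simpleTensor, ← K.siteProd_simpleTensor fun i => star (a i),
    ← K.star_siteProd, star_eq_adjoint, star_eq_adjoint, adjoint_inner_right,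
    adjoint_inner_right, hcomm]

lemma siteProd_apply_simpleTensor_of_commute {f : ∀ i, H i →L[ℂ] H i} {ω : ∀ i, H i}
    (hf : ∀ i < n, Commute (K.site i (f i)) x) (hω : ∀ i, f i (ω i) = ω i) :
    K.siteProd f n (x (simpleTensor tp n ω)) = x (simpleTensor tp n ω) := by
  have hcomm := DFunLike.congr_fun (K.commute_siteProd hf).eq (simpleTensor tp n ω)
  rw [mul_apply_eq_comp, mul_apply_eq_comp, K.siteProd_simpleTensor] at hcomm
  simpa only [hω] using hcomm

/-- Both sides equal `⟪J (⨂ Dᵢ) y (⨂ ωᵢ), x (⨂ ωᵢ)⟫`, with `Dᵢ` the regularized operator of the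
`i`-th relation and `J` the product conjugation. -/
lemma inner_siteProd_commutantSource_eq (hx : ∀ i < n, ∀ a ∈ A i, Commute (K.site i a) x)
    (hy : ∀ i < n, ∀ b ∈ (A i).commutant, Commute (K.site i b) y)
    {J : ∀ i, H i →L⋆[ℂ] H i} (hJ : ∀ i, IsConjugation (J i)) (hJξ : ∀ i, J i (ξ i) = ξ i)
    {ω : ∀ i, H i} (hxω : x (simpleTensor tp n ω) ∈ K.initial n)
    (hyω : y (simpleTensor tp n ω) ∈ K.initial n) (ω' : ∀ i, H i) {δ : ℝ} (hδ : δ ≠ 0) :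
    ⟪star y (simpleTensor tp n ω'), K.siteProd
      (fun i => commutantSource (A i) (J i) (ω i) (ω' i) δ) n (x (simpleTensor tp n ω))⟫_ℂ =
    ⟪star x (simpleTensor tp n ω'), K.siteProd
      (fun i => regSource (starRelation (A i) (J i) (ω i) (ω' i)) δ) n
        (y (simpleTensor tp n ω))⟫_ℂ := by
  obtain ⟨J', hJ', hJ'tensor⟩ := K.exists_isConjugation_simpleTensor hJ hJξ
  let D := K.siteProd (fun i => regOp (starRelation (A i) (J i) (ω i) (ω' i)) δ) n
  have hsource : ∀ z ∈ K.initial n, ⟪star x (simpleTensor tp n ω'), K.siteProd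
      (fun i => regSource (starRelation (A i) (J i) (ω i) (ω' i)) δ) n z⟫_ℂ =
        ⟪J' (x (simpleTensor tp n ω)), D z⟫_ℂ := fun z hz => by
    refine K.map_eq_map_of_mem_initial (S := innerSL ℂ _ ∘L _) (T := innerSL ℂ _ ∘L D)
      (fun h => ?_) hz
    have hinner := K.inner_simpleTensor_star_apply hx
      fun i => regSource_mem_closure_starOrbit (A := A i) (ω := ω i) (ω' := ω' i) (hJ i) hδ (h i)
    rw [← hJ'tensor, ← K.siteProd_simpleTensor, ← K.siteProd_simpleTensor] at hinner
    simp only [comp_apply, innerSL_apply_apply]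
    rw [hJ'.inner_map_left, ← inner_conj_symm, hinner, inner_conj_symm]
  have hcommutant : ∀ z ∈ K.initial n, ⟪star y (simpleTensor tp n ω'), K.siteProd
      (fun i => commutantSource (A i) (J i) (ω i) (ω' i) δ) n z⟫_ℂ =
        ⟪J' (D (y (simpleTensor tp n ω))), z⟫_ℂ := fun z hz => by
    refine K.map_eq_map_of_mem_initial (S := innerSL ℂ _ ∘L _) (T := innerSL ℂ _) (fun h => ?_) hz
    have hinner := K.inner_simpleTensor_star_apply (A := fun i => (A i).commutant) hy
      fun i => commutantSource_mem_closure_starOrbit (ω := ω i) (ω' := ω' i) (hJ i) hδ (h i)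
    rw [← K.siteProd_simpleTensor, ← K.siteProd_simpleTensor, ← K.star_siteProd, ← hJ'tensor,
      star_eq_adjoint (K.siteProd _ n), adjoint_inner_right] at hinner
    simp only [comp_apply, innerSL_apply_apply]
    rw [hJ'.inner_map_left, ← inner_conj_symm, hinner, inner_conj_symm]
  rw [hsource _ hyω, hcommutant _ hxω, hJ'.inner_map_left]

lemma tendsto_siteProd_of_siteProd_eq_self {ι : Type*} {l : Filter ι}
    {C : ι → ∀ i, H i →L[ℂ] H i} {F T : ∀ i, H i →L[ℂ] H i} (hC : ∀ d i, ‖C d i‖ ≤ 1)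
    (hF : ∀ i, ‖F i‖ ≤ 1) (hlim : ∀ i h, Tendsto (fun d => C d i (F i h)) l (𝓝 (T i (F i h))))
    {z : E} (hz : K.siteProd F n z = z) :
    Tendsto (fun d => K.siteProd (C d) n z) l (𝓝 (K.siteProd T n z)) := by
  have htendsto := K.tendsto_siteProd (C := fun d i => C d i * F i) (T := fun i => T i * F i)
    (fun d i => (norm_mul_le _ _).trans (mul_le_one₀ (hC d i) (norm_nonneg _) (hF i))) hlim n z
  simpa only [K.siteProd_mul, mul_apply_eq_comp, hz] using htendsto

lemma siteProd_cyclicProjection_apply {B : ∀ i, VonNeumannAlgebra (H i)} {ω : ∀ i, H i}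
    (hx : ∀ i < n, Commute (K.site i (cyclicProjection (B i) (ω i))) x) :
    K.siteProd (fun i => cyclicProjection (B i) (ω i)) n (x (simpleTensor tp n ω)) =
      x (simpleTensor tp n ω) :=
  K.siteProd_apply_simpleTensor_of_commute hx fun i =>
    cyclicProjection_of_mem_closure (subset_closure (mem_orbit.2 ⟨1, one_mem (B i), rfl⟩))

lemma inner_star_apply_simpleTensor_comm (hx : ∀ i < n, ∀ a ∈ A i, Commute (K.site i a) x)
    (hy : ∀ i < n, ∀ b ∈ (A i).commutant, Commute (K.site i b) y) {ω : ∀ i, H i}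
    (hxω : x (simpleTensor tp n ω) ∈ K.initial n) (hyω : y (simpleTensor tp n ω) ∈ K.initial n)
    (ω' : ∀ i, H i) : ⟪star y (simpleTensor tp n ω'), x (simpleTensor tp n ω)⟫_ℂ =
      ⟪star x (simpleTensor tp n ω'), y (simpleTensor tp n ω)⟫_ℂ := by
  choose J hJ hJξ using fun i => exists_isConjugation_map_eq_self (K.norm_eq_one i)
  have cyclic_x := K.siteProd_cyclicProjection_apply (ω := ω) fun i hi => hx i hi _ <| by
    simpa only [VonNeumannAlgebra.commutant_commutant] using
      cyclicProjection_mem_commutant (A i).commutant (ω i)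
  have cyclic_y := K.siteProd_cyclicProjection_apply (ω := ω) fun i hi =>
    hy i hi _ (cyclicProjection_mem_commutant (A i) (ω i))
  have cyclic_star_y := K.siteProd_cyclicProjection_apply (x := star y) (ω := ω') fun i hi => by
    simpa only [← map_star, star_cyclicProjection] using
      (hy i hi _ (cyclicProjection_mem_commutant (A i) (ω' i))).star_star
  have hleft := K.tendsto_siteProd_of_siteProd_eq_self (l := 𝓝[≠] (0 : ℝ))
    (fun δ i => norm_commutantSource_le (A := A i) (ω := ω i) (ω' := ω' i) (δ := δ) (hJ i))
    (fun i => norm_cyclicProjection_le _ _)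
    (fun i h => tendsto_commutantSource (hJ i) (cyclicProjection_mem_closure _ _ h)) cyclic_x
  have hright := K.tendsto_siteProd_of_siteProd_eq_self (l := 𝓝[≠] (0 : ℝ)) (T := fun i => 1)
    (fun δ i => norm_regSource_le (δ := δ) (R := starRelation (A i) (J i) (ω i) (ω' i)))
    (fun i => norm_cyclicProjection_le _ _)
    (fun i h => tendsto_regSource_starRelation (cyclicProjection_mem_closure _ _ h)) cyclic_y
  have hlim := tendsto_nhds_unique_of_eventuallyEq
    ((tendsto_const_nhds (x := star y (simpleTensor tp n ω'))).inner hleft)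
    ((tendsto_const_nhds (x := star x (simpleTensor tp n ω'))).inner hright)
    (eventually_nhdsWithin_of_forall fun δ hδ =>
      K.inner_siteProd_commutantSource_eq hx hy hJ hJξ hxω hyω ω' hδ)
  have hadj := K.star_siteProd (fun i => cyclicProjection (A i) (ω' i)) n
  simp only [star_cyclicProjection] at hadj
  rwa [← hadj, star_eq_adjoint (K.siteProd _ n), adjoint_inner_right, cyclic_star_y,
    K.siteProd_one] at hlim

/-- The commutation theorem `(⨂ Aᵢ)' = ⨂ Aᵢ'` for the first `n` factors. -/
lemma mul_mul_initialProjection_comm (hx : ∀ i < n, ∀ a ∈ A i, Commute (K.site i a) x)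
    (hy : ∀ i < n, ∀ b ∈ (A i).commutant, Commute (K.site i b) y)
    (hxP : Commute x (K.initialProjection n)) (hyP : Commute y (K.initialProjection n)) :
    x * y * K.initialProjection n = y * x * K.initialProjection n := by
  refine K.mul_initialProjection_eq fun ω => ?_
  have hmem := K.simpleTensor_mem_initial n ω
  have hxω := K.mem_initial_of_commute hxP hmem
  have hyω := K.mem_initial_of_commute hyP hmem
  refine K.eq_of_forall_inner_simpleTensor (K.mem_initial_of_commute hxP hyω)
    (K.mem_initial_of_commute hyP hxω) fun ω' => ?_
  have hinner := K.inner_star_apply_simpleTensor_comm hx hy hxω hyω ω'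
  rw [star_eq_adjoint, star_eq_adjoint, adjoint_inner_left, adjoint_inner_left] at hinner
  rw [mul_apply_eq_comp, mul_apply_eq_comp, ← inner_conj_symm, ← hinner, inner_conj_symm]

end IsInfiniteTensorProduct

end UngradedCommutation

section ScaledCommute

variable {R : Type*} [Ring R] [Algebra ℂ R]

/-- Commutation up to the scalar `c`; for `c = ±1` and an involution `g` this says that `x` is
homogeneous for the grading `ad g`. -/
def ScaledCommute (c : ℂ) (g x : R) : Prop := g * x = c • (x * g)

lemma scaledCommute_one_iff {g x : R} : ScaledCommute 1 g x ↔ Commute g x := by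
  rw [ScaledCommute, one_smul, commute_iff_eq]

namespace ScaledCommute

variable {c d : ℂ} {g h x y : R}

lemma mul_right (hx : ScaledCommute c g x) (hy : ScaledCommute d g y) :
    ScaledCommute (c * d) g (x * y) := by
  rw [ScaledCommute, ← mul_assoc, hx, smul_mul_assoc, mul_assoc, hy, mul_smul_comm, smul_smul,
    mul_assoc]

lemma mul_left (hg : ScaledCommute c g x) (hh : ScaledCommute d h x) :
    ScaledCommute (c * d) (g * h) x := by
  rw [ScaledCommute, mul_assoc, hh, mul_smul_comm, ← mul_assoc, hg, smul_mul_assoc, smul_smul,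
    mul_assoc, mul_comm d c]

lemma add_right (hx : ScaledCommute c g x) (hy : ScaledCommute c g y) :
    ScaledCommute c g (x + y) := by
  rw [ScaledCommute, mul_add, hx, hy, add_mul, smul_add]

lemma sub_right (hx : ScaledCommute c g x) (hy : ScaledCommute c g y) :
    ScaledCommute c g (x - y) := by
  rw [ScaledCommute, mul_sub, hx, hy, sub_mul, smul_sub]

lemma pow_left (hx : ScaledCommute c g x) (m : ℕ) : ScaledCommute (c ^ m) (g ^ m) x := by
  induction m with
  | zero => simp only [pow_zero, scaledCommute_one_iff, Commute.one_left]
  | succ m ih =>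
    rw [pow_succ, pow_succ]
    exact ih.mul_left hx

lemma symm (hc : c * c = 1) (hx : ScaledCommute c g x) : ScaledCommute c x g := by
  rw [ScaledCommute, hx, smul_smul, hc, one_smul]

lemma map {S F : Type*} [Ring S] [Algebra ℂ S] [FunLike F R S] [AlgHomClass F ℂ R S] (φ : F)
    (hx : ScaledCommute c g x) : ScaledCommute c (φ g) (φ x) := by
  rw [ScaledCommute, ← map_mul, hx, map_smul, map_mul]

/-- `ad g` preserves commutants of sets of `ad g`-homogeneous elements. -/
lemma commute_conj (hc : c * c = 1) (hg : ScaledCommute c g x) (hxy : Commute x y) :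
    Commute x (g * y * g) := by
  have hconj := ((hg.symm hc).mul_right (scaledCommute_one_iff.2 hxy)).mul_right (hg.symm hc)
  rwa [mul_one, hc, scaledCommute_one_iff] at hconj

end ScaledCommute

lemma neg_one_pow_mul_self (m : ℕ) : (-1 : ℂ) ^ m * (-1) ^ m = 1 := by
  rw [← mul_pow, neg_one_mul, neg_neg, one_pow]

section HomogeneousParts

variable {g : R} (hg : g * g = 1)
include hg

lemma scaledCommute_add_conj (x : R) : ScaledCommute 1 g (x + g * x * g) := by
  rw [ScaledCommute, one_smul, mul_add, add_mul, mul_assoc _ g g, hg, ← mul_assoc g (g * x),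
    ← mul_assoc g g, hg, one_mul, mul_one, add_comm]

lemma scaledCommute_sub_conj (x : R) : ScaledCommute (-1) g (x - g * x * g) := by
  rw [ScaledCommute, neg_one_smul, mul_sub, sub_mul, mul_assoc _ g g, hg, ← mul_assoc g (g * x),
    ← mul_assoc g g, hg, one_mul, mul_one, neg_sub]

lemma scaledCommute_iff_conj_eq {c : ℂ} {x : R} : ScaledCommute c g x ↔ g * x * g = c • x := by
  refine ⟨fun h => ?_, fun h => ?_⟩
  · rw [h, smul_mul_assoc, mul_assoc, hg, mul_one]
  · rw [ScaledCommute, ← smul_mul_assoc, ← h, mul_assoc, hg, mul_one]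

end HomogeneousParts

lemma conj_mem_centralizer {M : Type*} [Monoid M] {g x : M} (hg : g * g = 1) {S : Set M}
    (hS : ∀ s ∈ S, g * s * g ∈ S) (hx : x ∈ Set.centralizer S) :
    g * x * g ∈ Set.centralizer S := fun s hs => by
  calc s * (g * x * g) = g * (g * s * g * x) * g := by simp only [← mul_assoc, hg, one_mul]
    _ = g * (x * (g * s * g)) * g := by rw [hx _ (hS s hs)]
    _ = g * x * g * s := by simp only [mul_assoc, hg, mul_one]

lemma eq_half_add_conj_add_half_sub_conj (g x : R) :
    x = (2⁻¹ : ℂ) • (x + g * x * g) + (2⁻¹ : ℂ) • (x - g * x * g) := by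
  module

/-- Averaging over the commuting involutions `g k` decomposes an element of the commutant into
jointly homogeneous elements of the commutant. -/
lemma mem_span_homogeneous {S : Set R} {g : ℕ → R} {n : ℕ} (hg : ∀ k < n, g k * g k = 1)
    (hcomm : ∀ j k, Commute (g j) (g k))
    (hS : ∀ k < n, ∀ s ∈ S, ∃ c : ℂ, c * c = 1 ∧ ScaledCommute c (g k) s) {x : R}
    (hx : x ∈ Set.centralizer S) : x ∈ Submodule.span ℂ
      {z ∈ Set.centralizer S | ∃ e : ℕ → ℕ, ∀ k < n, ScaledCommute ((-1) ^ e k) (g k) z} := by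
  induction n with
  | zero => exact Submodule.subset_span ⟨hx, 0, by simp⟩
  | succ n ih =>
    refine Submodule.span_le.2 ?_ (ih (fun k hk => hg k (by omega)) fun k hk => hS k (by omega))
    rintro z ⟨hz, e, he⟩
    have hconj : g n * z * g n ∈ Set.centralizer S := fun s hs => by
      obtain ⟨c, hc, hcs⟩ := hS n (by omega) s hs
      exact hcs.commute_conj hc (hz s hs)
    have hhom : ∀ k < n, ScaledCommute ((-1) ^ e k) (g k) (g n * z * g n) := fun k hk => by
      have hgk := scaledCommute_one_iff.2 (hcomm k n)
      simpa only [one_mul, mul_one] using (hgk.mul_right (he k hk)).mul_right hgk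
    have key : ∀ w ∈ Set.centralizer S, ∀ m : ℕ, ScaledCommute ((-1) ^ m) (g n) w →
        (∀ k < n, ScaledCommute ((-1) ^ e k) (g k) w) → w ∈ Submodule.span ℂ {z ∈
          Set.centralizer S | ∃ e : ℕ → ℕ, ∀ k < n + 1, ScaledCommute ((-1) ^ e k) (g k) z} := by
      refine fun w hw m hm hwe => Submodule.subset_span ⟨hw, Function.update e n m, fun k hk => ?_⟩
      rcases eq_or_ne k n with rfl | hkn
      · rwa [Function.update_self]
      · rw [Function.update_of_ne hkn]
        exact hwe k (by omega)
    rw [eq_half_add_conj_add_half_sub_conj (g n) z]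
    refine add_mem (Submodule.smul_mem _ _ (key _ (Set.add_mem_centralizer hz hconj) 0 ?_ ?_))
      (Submodule.smul_mem _ _ (key _ ?_ 1 ?_ ?_))
    · simpa using scaledCommute_add_conj (hg n (by omega)) z
    · exact fun k hk => (he k hk).add_right (hhom k hk)
    · exact (Subring.centralizer S).sub_mem hz hconj
    · simpa using scaledCommute_sub_conj (hg n (by omega)) z
    · exact fun k hk => (he k hk).sub_right (hhom k hk)

lemma mul_mul_eq_of_scaledCommute {c : ℂ} (hc : c * c = 1) {k k' x y q : R} (hk : k * k = 1)
    (hk' : k' * k' = 1) (hkk' : Commute k k') (hxk' : ScaledCommute c k' x)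
    (hyk : ScaledCommute c k y) (h : k * x * (k' * y) * q = k' * y * (k * x) * q) :
    x * y * q = y * x * q := by
  have hleft : k * x * (k' * y) = c • (k * k' * (x * y)) := by
    rw [mul_assoc, ← mul_assoc x, hxk'.symm hc, smul_mul_assoc, mul_smul_comm]
    simp only [mul_assoc]
  have hright : k' * y * (k * x) = c • (k * k' * (y * x)) := by
    rw [mul_assoc, ← mul_assoc y, hyk.symm hc, smul_mul_assoc, mul_smul_comm, hkk'.eq]
    simp only [mul_assoc]
  have cancel : ∀ z, k' * k * (k * k' * z) = z := fun z => by
    rw [mul_assoc k', ← mul_assoc k, ← mul_assoc k, hk, one_mul, ← mul_assoc, hk', one_mul]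
  have hc0 : c ≠ 0 := left_ne_zero_of_mul_eq_one hc
  rw [hleft, hright, smul_mul_assoc, smul_mul_assoc] at h
  simpa only [mul_assoc (k * k'), cancel] using congrArg (k' * k * ·) (smul_right_injective R hc0 h)

end ScaledCommute

section GradedCommutation

variable {H : ℕ → Type*} [∀ i, NormedAddCommGroup (H i)] [∀ i, InnerProductSpace ℂ (H i)]
  [∀ i, CompleteSpace (H i)] {E : Type*} [NormedAddCommGroup E] [InnerProductSpace ℂ E]
  [CompleteSpace E] {ξ : ∀ i, H i} {tp : (n : ℕ) → ((i : Fin n) → H i) → E}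

namespace IsInfiniteTensorProduct

variable (K : IsInfiniteTensorProduct ξ tp)

lemma scaledCommute_siteProd {n : ℕ} {T : ∀ i, H i →L[ℂ] H i} {x : E →L[ℂ] E} {c : ℕ → ℂ}
    (h : ∀ i < n, ScaledCommute (c i) (K.site i (T i)) x) :
    ScaledCommute (∏ i ∈ Finset.range n, c i) (K.siteProd T n) x := by
  induction n with
  | zero => exact scaledCommute_one_iff.2 (Commute.one_left x)
  | succ n ih =>
    rw [Finset.prod_range_succ]
    exact (ih fun i hi => h i (by omega)).mul_left (h n (by omega))

variable (U : ∀ i, H i →L[ℂ] H i)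

/-- The Klein operator `U₀ ^ f 0 ⊗ ⋯ ⊗ Uₙ₋₁ ^ f (n - 1) ⊗ 1 ⊗ ⋯`. -/
def klein (f : ℕ → ℕ) (n : ℕ) : E →L[ℂ] E := K.siteProd (fun i => U i ^ f i) n

/-- The operators `klein (p • s i) n * site i a`, with `i < n` and `a ∈ S i` of parity `p`: the
string of Klein factors which accompanies an odd operator at the site `i` is prescribed by the row
`s i` of a matrix. -/
def stringOperators (S : ∀ i, Set (H i →L[ℂ] H i)) (s : ℕ → ℕ → ℕ) (n : ℕ) : Set (E →L[ℂ] E) :=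
  {g | ∃ i < n, ∃ a ∈ S i, ∃ p : Bool, ScaledCommute ((-1) ^ p.toNat) (U i) a ∧
    g = K.klein U (p.toNat • s i) n * K.site i a}

variable {U} {n : ℕ} {x y : E →L[ℂ] E}

lemma scaledCommute_klein (f : ℕ → ℕ) {e : ℕ → ℕ}
    (he : ∀ i < n, ScaledCommute ((-1) ^ e i) (K.site i (U i)) x) :
    ScaledCommute ((-1) ^ ∑ i ∈ Finset.range n, e i * f i) (K.klein U f n) x := by
  rw [← Finset.prod_pow_eq_pow_sum]
  refine K.scaledCommute_siteProd fun i hi => ?_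
  rw [map_pow, pow_mul]
  exact (he i hi).pow_left (f i)

lemma scaledCommute_site_site {i : ℕ} {a : H i →L[ℂ] H i} {p : ℕ}
    (ha : ScaledCommute ((-1) ^ p) (U i) a) (j : ℕ) :
    ScaledCommute ((-1) ^ Pi.single (M := fun _ => ℕ) i p j) (K.site j (U j)) (K.site i a) := by
  rcases eq_or_ne j i with rfl | hji
  · rw [Pi.single_eq_same]
    exact ha.map (K.site j)
  · rw [Pi.single_eq_of_ne hji, pow_zero, scaledCommute_one_iff]
    exact K.commute_site hji _ _

lemma scaledCommute_klein_site {i : ℕ} (hi : i < n) {a : H i →L[ℂ] H i} {p : ℕ}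
    (ha : ScaledCommute ((-1) ^ p) (U i) a) (f : ℕ → ℕ) :
    ScaledCommute ((-1) ^ (p * f i)) (K.klein U f n) (K.site i a) := by
  have hsum : ∑ j ∈ Finset.range n, Pi.single (M := fun _ => ℕ) i p j * f j = p * f i := by
    rw [Finset.sum_eq_single_of_mem i (Finset.mem_range.2 hi) fun j _ hj => by
      rw [Pi.single_eq_of_ne hj, zero_mul], Pi.single_eq_same]
  exact hsum ▸ K.scaledCommute_klein f fun j _ => K.scaledCommute_site_site ha j

lemma klein_mul_self (hU : ∀ i, U i * U i = 1) (f : ℕ → ℕ) (n : ℕ) :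
    K.klein U f n * K.klein U f n = 1 := by
  simp only [klein, ← siteProd_mul, ← (Commute.refl (U _)).mul_pow, hU, one_pow, siteProd_one]

lemma commute_klein (f g : ℕ → ℕ) (n : ℕ) : Commute (K.klein U f n) (K.klein U g n) := by
  simp only [klein, commute_iff_eq, ← siteProd_mul, ← pow_add, add_comm]

lemma scaledCommute_site_of_mem_centralizer (hU : ∀ i, U i * U i = 1)
    {S : ∀ i, Set (H i →L[ℂ] H i)} {s : ℕ → ℕ → ℕ} {e : ℕ → ℕ}
    (hx : x ∈ Set.centralizer (K.stringOperators U S s n))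
    (he : ∀ i < n, ScaledCommute ((-1) ^ e i) (K.site i (U i)) x) {i : ℕ} (hi : i < n)
    {a : H i →L[ℂ] H i} (ha : a ∈ S i) {p : Bool} (hap : ScaledCommute ((-1) ^ p.toNat) (U i) a) :
    ScaledCommute ((-1) ^ (p.toNat * ∑ j ∈ Finset.range n, e j * s i j)) (K.site i a) x := by
  have hstring := scaledCommute_one_iff.2 (hx _ ⟨i, hi, a, ha, p, hap, rfl⟩)
  have hsite := (K.scaledCommute_klein (p.toNat • s i) he).mul_left hstring
  rw [← mul_assoc, K.klein_mul_self hU, one_mul, mul_one] at hsite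
  convert hsite using 2
  rw [Finset.mul_sum]
  exact Finset.sum_congr rfl fun j _ => by simp only [Pi.smul_apply, smul_eq_mul]; ring

lemma commute_site_klein_mul (hU : ∀ i, U i * U i = 1) {i : ℕ} (hi : i < n)
    {A : VonNeumannAlgebra (H i)} (hUA : ∀ a ∈ A, U i * a * U i ∈ A) {f : ℕ → ℕ}
    (hx : ∀ a ∈ A, ∀ p : Bool, ScaledCommute ((-1) ^ p.toNat) (U i) a →
      ScaledCommute ((-1) ^ (p.toNat * f i)) (K.site i a) x) {a : H i →L[ℂ] H i} (ha : a ∈ A) :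
    Commute (K.site i a) (K.klein U f n * x) := by
  have homogeneous : ∀ (p : Bool), ∀ b ∈ A, ScaledCommute ((-1) ^ p.toNat) (U i) b →
      Commute (K.site i b) (K.klein U f n * x) := fun p b hb hbp => by
    have hmul := ((K.scaledCommute_klein_site hi hbp f).symm
      (neg_one_pow_mul_self _)).mul_right (hx b hb p hbp)
    rwa [neg_one_pow_mul_self, scaledCommute_one_iff] at hmul
  rw [eq_half_add_conj_add_half_sub_conj (U i) a, map_add, map_smul, map_smul]
  refine ((homogeneous false _ (add_mem ha (hUA a ha)) ?_).smul_left _).add_left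
    ((homogeneous true _ (sub_mem ha (hUA a ha)) ?_).smul_left _)
  · simpa using scaledCommute_add_conj (hU i) a
  · simpa using scaledCommute_sub_conj (hU i) a

section

variable {A : ∀ i, VonNeumannAlgebra (H i)} {s : ℕ → ℕ → ℕ}

/-- Multiplying `x` and `y` by the Klein operators of `∑ j, e j * s · j` and `∑ j, e' j * s j ·`
reduces the claim to the ungraded commutation theorem; the signs which this creates are the same on
both sides, by exchanging the order of summation. -/
lemma mul_mul_initialProjection_comm_of_homogeneous (hU : ∀ i, U i * U i = 1)
    (hUA : ∀ i, ∀ a ∈ A i, U i * a * U i ∈ A i)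
    (hx : x ∈ Set.centralizer (K.stringOperators U (fun i => A i) s n))
    (hy : y ∈ Set.centralizer (K.stringOperators U (fun i => (A i).commutant) (fun i j => s j i) n))
    (hxP : Commute x (K.initialProjection n)) (hyP : Commute y (K.initialProjection n))
    {e e' : ℕ → ℕ} (hxe : ∀ i < n, ScaledCommute ((-1) ^ e i) (K.site i (U i)) x)
    (hye : ∀ i < n, ScaledCommute ((-1) ^ e' i) (K.site i (U i)) y) :
    x * y * K.initialProjection n = y * x * K.initialProjection n := by
  set k := K.klein U (fun i => ∑ j ∈ Finset.range n, e j * s i j) n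
  set k' := K.klein U (fun i => ∑ j ∈ Finset.range n, e' j * s j i) n
  have hklein : k * x * (k' * y) * K.initialProjection n =
      k' * y * (k * x) * K.initialProjection n :=
    K.mul_mul_initialProjection_comm
      (fun i hi a ha => K.commute_site_klein_mul hU hi (hUA i)
        (fun b hb p => K.scaledCommute_site_of_mem_centralizer hU hx hxe hi hb) ha)
      (fun i hi a ha => K.commute_site_klein_mul hU hi
        (fun b hb => by
          rw [← SetLike.mem_coe, VonNeumannAlgebra.coe_commutant] at hb ⊢
          exact conj_mem_centralizer (hU i) (hUA i) hb)
        (fun b hb p => K.scaledCommute_site_of_mem_centralizer hU hy hye hi hb) ha)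
      ((K.commute_siteProd_initialProjection _ n).mul_left hxP)
      ((K.commute_siteProd_initialProjection _ n).mul_left hyP)
  have hky := K.scaledCommute_klein (fun i => ∑ j ∈ Finset.range n, e j * s i j) hye
  have hk'x := K.scaledCommute_klein (fun i => ∑ j ∈ Finset.range n, e' j * s j i) hxe
  have hsign : ∑ i ∈ Finset.range n, e' i * ∑ j ∈ Finset.range n, e j * s i j =
      ∑ i ∈ Finset.range n, e i * ∑ j ∈ Finset.range n, e' j * s j i := by
    simp only [Finset.mul_sum]
    rw [Finset.sum_comm]
    exact Finset.sum_congr rfl fun i _ => Finset.sum_congr rfl fun j _ => by ring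
  rw [hsign] at hky
  exact mul_mul_eq_of_scaledCommute (neg_one_pow_mul_self _) (K.klein_mul_self hU _ n)
    (K.klein_mul_self hU _ n) (K.commute_klein _ _ n) hk'x hky hklein

lemma exists_scaledCommute_site_stringOperators {S : ∀ i, Set (H i →L[ℂ] H i)} (k : ℕ)
    {g : E →L[ℂ] E} (hg : g ∈ K.stringOperators U S s n) :
    ∃ c : ℂ, c * c = 1 ∧ ScaledCommute c (K.site k (U k)) g := by
  obtain ⟨i, -, a, -, p, hap, rfl⟩ := hg
  have hklein : Commute (K.site k (U k)) (K.klein U (p.toNat • s i) n) :=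
    (K.commute_siteProd fun j _ => by
      rcases eq_or_ne j k with rfl | hjk
      · rw [map_pow]; exact Commute.pow_self _ _
      · exact K.commute_site hjk _ _).symm
  exact ⟨_, neg_one_pow_mul_self _, one_mul (_ : ℂ) ▸
    (scaledCommute_one_iff.2 hklein).mul_right (K.scaledCommute_site_site hap k)⟩

lemma mem_span_homogeneous_stringOperators (hU : ∀ i, U i * U i = 1)
    {S : ∀ i, Set (H i →L[ℂ] H i)} (hx : x ∈ Set.centralizer (K.stringOperators U S s n))
    (hxP : Commute x (K.initialProjection n)) :
    x ∈ Submodule.span ℂ {z | z ∈ Set.centralizer (K.stringOperators U S s n) ∧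
      Commute z (K.initialProjection n) ∧
      ∃ e : ℕ → ℕ, ∀ i < n, ScaledCommute ((-1) ^ e i) (K.site i (U i)) z} := by
  have hmem := mem_span_homogeneous (g := fun k => K.site k (U k)) (n := n)
    (S := insert (K.initialProjection n) (K.stringOperators U S s n)) (x := x)
    (fun k _ => by rw [← map_mul, hU, map_one])
    (fun j k => by
      rcases eq_or_ne j k with rfl | hjk
      · exact Commute.refl _
      · exact K.commute_site hjk _ _)
    (fun k hk g hg => by
      rcases hg with rfl | hg
      · exact ⟨1, one_mul 1, scaledCommute_one_iff.2 (K.commute_site_initialProjection hk _)⟩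
      · exact K.exists_scaledCommute_site_stringOperators k hg)
    (by rintro g (rfl | hg); exacts [hxP.eq.symm, hx g hg])
  refine Submodule.span_mono ?_ hmem
  rintro z ⟨hz, he⟩
  exact ⟨fun g hg => hz g (Set.mem_insert_of_mem _ hg),
    ((hz _ (Set.mem_insert _ _)).symm : z * _ = _), he⟩

theorem mul_mul_initialProjection_comm_of_stringOperators (hU : ∀ i, U i * U i = 1)
    (hUA : ∀ i, ∀ a ∈ A i, U i * a * U i ∈ A i)
    (hx : x ∈ Set.centralizer (K.stringOperators U (fun i => A i) s n))
    (hy : y ∈ Set.centralizer (K.stringOperators U (fun i => (A i).commutant) (fun i j => s j i) n))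
    (hxP : Commute x (K.initialProjection n)) (hyP : Commute y (K.initialProjection n)) :
    x * y * K.initialProjection n = y * x * K.initialProjection n := by
  have hxspan := K.mem_span_homogeneous_stringOperators hU hx hxP
  clear hx hxP
  induction hxspan using Submodule.span_induction with
  | zero => simp only [zero_mul, mul_zero]
  | add u v _ _ hu hv => simp only [add_mul, mul_add, hu, hv]
  | smul c u _ hu => simp only [smul_mul_assoc, mul_smul_comm, hu]
  | mem u hu =>
    obtain ⟨hu, huP, e, hue⟩ := hu
    have hyspan := K.mem_span_homogeneous_stringOperators hU hy hyP
    clear hy hyP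
    induction hyspan using Submodule.span_induction with
    | zero => simp only [zero_mul, mul_zero]
    | add v w _ _ hv hw => simp only [add_mul, mul_add, hv, hw]
    | smul c v _ hv => simp only [smul_mul_assoc, mul_smul_comm, hv]
    | mem v hv =>
      obtain ⟨hv, hvP, e', hve⟩ := hv
      exact K.mul_mul_initialProjection_comm_of_homogeneous hU hUA hu hv huP hvP hue hve

end

end IsInfiniteTensorProduct

end GradedCommutation

section InfiniteGradedCommutation

open ContinuousLinearMap

variable {H : ℕ → Type*} [∀ i, NormedAddCommGroup (H i)] [∀ i, InnerProductSpace ℂ (H i)]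
  [∀ i, CompleteSpace (H i)] {E : Type*} [NormedAddCommGroup E] [InnerProductSpace ℂ E]
  [CompleteSpace E] {ξ : ∀ i, H i} {tp : (n : ℕ) → ((i : Fin n) → H i) → E}

lemma commute_compression {M : Type*} [Semigroup M] {g g' p x : M} (hg : Commute g p)
    (hg' : Commute g' p) (hgp : g' * p = g * p) (hx : Commute g' x) :
    Commute g (p * x * p) := by
  calc g * (p * x * p) = p * (g' * x) * p := by
        rw [← mul_assoc, ← mul_assoc, ← hgp, hg'.eq, mul_assoc p]
    _ = p * x * (g' * p) := by rw [hx.eq]; simp only [mul_assoc]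
    _ = p * x * p * g := by rw [hgp, hg.eq, mul_assoc, mul_assoc, mul_assoc]

namespace IsInfiniteTensorProduct

variable (K : IsInfiniteTensorProduct ξ tp)

/-- The Jordan–Wigner operators `F i ^ p * site i a`, with `a ∈ S i` of parity `p`. The string `F i`
is meant to be a product of Klein operators, which makes odd operators at distinct sites
anticommute. -/
def jordanWigner (F : ℕ → E →L[ℂ] E) (U : ∀ i, H i →L[ℂ] H i) (S : ∀ i, Set (H i →L[ℂ] H i)) :
    Set (E →L[ℂ] E) :=
  {g | ∃ i, ∃ a ∈ S i, ∃ p : Bool, ScaledCommute ((-1) ^ p.toNat) (U i) a ∧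
    g = F i ^ p.toNat * K.site i a}

/-- `F i` is the infinite product `⨂ⱼ Uⱼ ^ s i j` of Klein operators. -/
def IsKleinFamily (U : ∀ i, H i →L[ℂ] H i) (s : ℕ → ℕ → ℕ) (F : ℕ → E →L[ℂ] E) : Prop :=
  ∀ i n, i < n → ∀ x, F i (simpleTensor tp n x) = K.klein U (s i) n (simpleTensor tp n x)

variable {K} {U : ∀ i, H i →L[ℂ] H i} {s : ℕ → ℕ → ℕ} {F : ℕ → E →L[ℂ] E}

namespace IsKleinFamily

variable (hF : K.IsKleinFamily U s F)
include hF

lemma mul_self_eq_one (hU : ∀ i, U i * U i = 1) (i : ℕ) : F i * F i = 1 := by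
  refine K.ext_simpleTensor (i + 1) fun n x hn => ?_
  have hklein := DFunLike.congr_fun (K.klein_mul_self hU (s i) n) (simpleTensor tp n x)
  simp only [mul_apply_eq_comp, klein, K.siteProd_simpleTensor, hF i n hn] at hklein ⊢
  exact hklein

lemma star_eq (hUstar : ∀ i, star (U i) = U i) (i : ℕ) : star (F i) = F i := by
  have hklein : ∀ n, star (K.klein U (s i) n) = K.klein U (s i) n := fun n => by
    simp only [klein, star_siteProd, star_pow, hUstar]
  refine K.ext_simpleTensor (i + 1) fun n x hn => K.ext_inner_simpleTensor (i + 1) fun m y _ => ?_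
  rw [← K.simpleTensor_truncate (le_max_left n m), ← K.simpleTensor_truncate (le_max_right n m) y,
    star_eq_adjoint, adjoint_inner_right, hF i _ (lt_max_of_lt_left hn),
    hF i _ (lt_max_of_lt_left hn), ← adjoint_inner_right, ← star_eq_adjoint, hklein]

lemma commute_initialProjection (hUstar : ∀ i, star (U i) = U i) {i n : ℕ} (hi : i < n) :
    Commute (F i) (K.initialProjection n) := by
  have hinv : ∀ z ∈ K.initial n, F i z ∈ K.initial n := fun z hz => K.map_mem_initial (fun x => by
    rw [hF i n hi, klein, K.siteProd_simpleTensor]; exact K.simpleTensor_mem_initial _ _) hz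
  exact commute_starProjection hinv ((hF.star_eq hUstar i).symm ▸ hinv)

lemma scaledCommute_site (i : ℕ) {j p : ℕ} {a : H j →L[ℂ] H j}
    (ha : ScaledCommute ((-1) ^ p) (U j) a) :
    ScaledCommute ((-1) ^ (p * s i j)) (F i) (K.site j a) := by
  refine K.ext_simpleTensor (max i j + 1) fun n x hn => ?_
  have hi : i < n := by omega
  have hj : j < n := by omega
  have hklein := DFunLike.congr_fun (K.scaledCommute_klein_site hj ha (s i)) (simpleTensor tp n x)
  simp only [mul_apply_eq_comp, _root_.smul_apply, K.site_simpleTensor hj, hF i n hi]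
    at hklein ⊢
  exact hklein

lemma commute {s' : ℕ → ℕ → ℕ} {F' : ℕ → E →L[ℂ] E} (hF' : K.IsKleinFamily U s' F') (i j : ℕ) :
    Commute (F i) (F' j) := by
  refine K.ext_simpleTensor (max i j + 1) fun n x hn => ?_
  have hklein := DFunLike.congr_fun (K.commute_klein (U := U) (s i) (s' j) n) (simpleTensor tp n x)
  simp only [mul_apply_eq_comp, klein, K.siteProd_simpleTensor, hF i n (by omega),
    hF' j n (by omega)] at hklein ⊢
  exact hklein

lemma compression_mem_centralizer_stringOperators (hUstar : ∀ i, star (U i) = U i)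
    {S : ∀ i, Set (H i →L[ℂ] H i)} {x : E →L[ℂ] E} (hx : x ∈ Set.centralizer (K.jordanWigner F U S))
    (n : ℕ) : K.initialProjection n * x * K.initialProjection n ∈
      Set.centralizer (K.stringOperators U S s n) := by
  rintro _ ⟨i, hi, a, ha, p, hap, rfl⟩
  have hsite := K.commute_site_initialProjection hi a
  refine commute_compression ((K.commute_siteProd_initialProjection _ n).mul_left hsite)
    (((hF.commute_initialProjection hUstar hi).pow_left _).mul_left hsite) ?_
    (hx _ ⟨i, a, ha, p, hap, rfl⟩)
  rw [mul_assoc, mul_assoc, hsite.eq, ← mul_assoc, ← mul_assoc]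
  congr 1
  refine K.mul_initialProjection_eq fun x => ?_
  cases p
  · simp [klein, siteProd_one]
  · simpa using hF i n hi x

variable {F' : ℕ → E →L[ℂ] E} (hF' : K.IsKleinFamily U (fun i j => s j i) F')
include hF'

lemma commute_jordanWigner {S T : ∀ i, Set (H i →L[ℂ] H i)}
    (hST : ∀ i, ∀ a ∈ S i, ∀ b ∈ T i, Commute a b) {g h : E →L[ℂ] E}
    (hg : g ∈ K.jordanWigner F U S) (hh : h ∈ K.jordanWigner F' U T) : Commute g h := by
  obtain ⟨i, a, ha, p, hap, rfl⟩ := hg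
  obtain ⟨j, b, hb, q, hbq, rfl⟩ := hh
  have hFF' := scaledCommute_one_iff.2 (((hF.commute hF' i j).pow_left p.toNat).pow_right q.toNat)
  have hFb := (hF.scaledCommute_site i hbq).pow_left p.toNat
  have haF' := (((hF'.scaledCommute_site j hap).pow_left q.toNat).symm (by
    rw [← pow_mul]; exact neg_one_pow_mul_self _))
  have hab : Commute (K.site i a) (K.site j b) := by
    rcases eq_or_ne i j with rfl | hij
    · exact (hST i a ha b hb).map (K.site i)
    · exact K.commute_site hij a b
  have hscaled := (hFF'.mul_right hFb).mul_left (haF'.mul_right (scaledCommute_one_iff.2 hab))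
  have hsign : p.toNat * s i j * q.toNat = q.toNat * s i j * p.toNat := by ring
  rwa [one_mul, mul_one, ← pow_mul, ← pow_mul, hsign, neg_one_pow_mul_self,
    scaledCommute_one_iff] at hscaled

/-- Compressing to the first `n` factors turns the Klein strings into finite ones. -/
theorem commute_of_mem_centralizer_jordanWigner (hUstar : ∀ i, star (U i) = U i)
    (hU : ∀ i, U i * U i = 1) {A : ∀ i, VonNeumannAlgebra (H i)}
    (hUA : ∀ i, ∀ a ∈ A i, U i * a * U i ∈ A i) {x y : E →L[ℂ] E}
    (hx : x ∈ Set.centralizer (K.jordanWigner F U fun i => A i))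
    (hy : y ∈ Set.centralizer (K.jordanWigner F' U fun i => (A i).commutant)) : Commute x y := by
  have habsorb : ∀ n (z : E →L[ℂ] E),
      K.initialProjection n * z * K.initialProjection n * K.initialProjection n =
        K.initialProjection n * z * K.initialProjection n := fun n z => by
    rw [mul_assoc, K.initialProjection_mul_self]
  have hcomm : ∀ n (z : E →L[ℂ] E), Commute
      (K.initialProjection n * z * K.initialProjection n) (K.initialProjection n) := fun n z => by
    rw [commute_iff_eq, habsorb, ← mul_assoc, ← mul_assoc, K.initialProjection_mul_self]
  refine K.commute_of_forall_commute_compression fun n => ?_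
  have hP := K.mul_mul_initialProjection_comm_of_stringOperators hU hUA
    (hF.compression_mem_centralizer_stringOperators hUstar hx n)
    (hF'.compression_mem_centralizer_stringOperators hUstar hy n) (hcomm n x) (hcomm n y)
  rwa [mul_assoc (_ * x * _), mul_assoc (_ * y * _), habsorb, habsorb] at hP

theorem centralizer_jordanWigner (hUstar : ∀ i, star (U i) = U i) (hU : ∀ i, U i * U i = 1)
    {A : ∀ i, VonNeumannAlgebra (H i)} (hUA : ∀ i, ∀ a ∈ A i, U i * a * U i ∈ A i) :
    Set.centralizer (K.jordanWigner F U fun i => A i) =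
      Set.centralizer (Set.centralizer (K.jordanWigner F' U fun i => (A i).commutant)) := by
  refine subset_antisymm (fun x hx y hy => ?_) (Set.centralizer_subset fun g hg h hh => ?_)
  · exact (hF.commute_of_mem_centralizer_jordanWigner hF' hUstar hU hUA hx hy).eq.symm
  · exact (hF.commute_jordanWigner hF' (fun i a ha b hb =>
      VonNeumannAlgebra.mem_commutant_iff.1 hb a ha) hg hh).eq.symm

end IsKleinFamily

variable (K)

lemma isKleinFamily_siteProd (U : ∀ i, H i →L[ℂ] H i) :
    K.IsKleinFamily U (fun i j => if j < i then 1 else 0) (K.siteProd U) := by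
  intro i n hi x
  rw [K.siteProd_simpleTensor_of_le hi.le, klein, K.siteProd_simpleTensor]
  exact simpleTensor_congr fun j _ => by simp only; split_ifs <;> simp

variable {W : E →L[ℂ] E}
  (hW : ∀ n x, W (simpleTensor tp n x) = simpleTensor tp n fun i => U i (x i))
include hW

lemma isKleinFamily_const : K.IsKleinFamily U (fun _ _ => 1) (fun _ => W) := fun i n _ x => by
  simp only [klein, K.siteProd_simpleTensor, pow_one, hW]

lemma isKleinFamily_siteProd_succ_mul (hU : ∀ i, U i * U i = 1) :
    K.IsKleinFamily U (fun i j => if i < j then 1 else 0) (fun i => K.siteProd U (i + 1) * W) := by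
  intro i n hi x
  rw [mul_apply_eq_comp, hW, K.siteProd_simpleTensor_of_le hi, klein, K.siteProd_simpleTensor]
  refine simpleTensor_congr fun j _ => ?_
  rcases lt_or_ge i j with hij | hji
  · simp [hij, not_lt.2 (Nat.succ_le_iff.2 hij)]
  · simp [hji.not_gt, Nat.lt_succ_iff.2 hji, ← mul_apply_eq_comp, hU]

end IsInfiniteTensorProduct

end InfiniteGradedCommutation

section FermiProduct

lemma cond_neg_eq_smul {V : Type*} [AddCommGroup V] [Module ℂ V] (b : Bool) (v : V) :
    cond b (-v) v = (-1 : ℂ) ^ b.toNat • v := by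
  cases b <;> simp

lemma sum_fin_ite_lt {n m : ℕ} (hmn : m ≤ n) (f : ℕ → ℕ) :
    ∑ i : Fin n, (if (i : ℕ) < m then f i else 0) = ∑ i ∈ Finset.range m, f i := by
  rw [Fin.sum_univ_eq_sum_range (fun i => if i < m then f i else 0), ← Finset.sum_filter]
  exact Finset.sum_congr (by ext; simp; omega) fun _ _ => rfl

/-- The left-hand side is the exponent of the Koszul sign in `infFermiGen`. -/
lemma card_filter_koszul {k n : ℕ} (hkn : k ≤ n) (s : Fin k → Bool) {t : ℕ → Bool}
    {t' : Fin n → Bool} (ht : ∀ i : Fin n, t i = t' i) :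
    (Finset.univ.filter fun p : Fin n × Fin n => p.2 < p.1 ∧
      (if h : (p.1 : ℕ) < k then s ⟨p.1, h⟩ else false) = true ∧ t' p.2 = true).card =
      ∑ i : Fin k, (s i).toNat * ∑ j ∈ Finset.range i, (t j).toNat := by
  let f : ℕ → ℕ := fun i => if h : i < k then
    (s ⟨i, h⟩).toNat * ∑ j ∈ Finset.range i, (t j).toNat else 0
  have hrow : ∀ i : Fin n, ∑ j : Fin n, (if j < i ∧
      (if h : (i : ℕ) < k then s ⟨i, h⟩ else false) = true ∧ t' j = true then 1 else 0) =
        if (i : ℕ) < k then f i else 0 := fun i => by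
    by_cases hi : (i : ℕ) < k
    · simp only [f, hi, dite_true, if_true, ← sum_fin_ite_lt i.2.le, Finset.mul_sum, ht]
      refine Finset.sum_congr rfl fun j _ => ?_
      cases s ⟨i, hi⟩ <;> cases t' j <;> simp
    · simp [hi]
  rw [Finset.card_filter, Fintype.sum_prod_type, Finset.sum_congr rfl fun i _ => hrow i,
    sum_fin_ite_lt hkn, Finset.sum_range]
  simp [f]

variable {H : ℕ → Type*} [∀ i, NormedAddCommGroup (H i)] [∀ i, InnerProductSpace ℂ (H i)]
  {E : Type*} [NormedAddCommGroup E] [InnerProductSpace ℂ E]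
  {ξ : ∀ i, H i} {tp : (n : ℕ) → ((i : Fin n) → H i) → E}

namespace IsInfiniteTensorProduct

variable (K : IsInfiniteTensorProduct ξ tp) {U : ∀ i, H i →L[ℂ] H i}

include K in
/-- Every vector is the sum of its even and odd parts, and `tp` is multilinear. -/
lemma ext_homogeneous (hU : ∀ i, U i * U i = 1) (n₀ : ℕ) {S T : E →L[ℂ] E}
    (h : ∀ n, n₀ ≤ n → ∀ (x : (i : Fin n) → H i) (t : Fin n → Bool),
      (∀ i : Fin n, U i (x i) = cond (t i) (-(x i)) (x i)) → S (tp n x) = T (tp n x)) : S = T := by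
  refine K.ext_simpleTensor n₀ fun n x hn => ?_
  let part : ∀ i : Fin n, Bool → H i := fun i b =>
    (2⁻¹ : ℂ) • (x i + (-1 : ℂ) ^ b.toNat • U i (x i))
  have hsum : (fun i : Fin n => x i) = fun i => ∑ b, part i b := funext fun i => by
    simp only [part, Fintype.sum_bool, Bool.toNat_true, Bool.toNat_false]
    module
  have hpart : ∀ (i : Fin n) (b : Bool), U i (part i b) = cond b (-(part i b)) (part i b) :=
    fun i b => by
      have hUU : U i (U i (x i)) = x i := DFunLike.congr_fun (hU i) (x i)
      cases b <;> simp [part, hUU, add_comm, ← smul_neg]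
  change S (K.multilinearMap n fun i => x i) = T (K.multilinearMap n fun i => x i)
  rw [hsum, MultilinearMap.map_sum, map_sum, map_sum]
  exact Finset.sum_congr rfl fun t _ => h n hn _ t fun i : Fin n => hpart i (t i)

variable [∀ i, CompleteSpace (H i)] [CompleteSpace E]

lemma siteProd_simpleTensor_of_homogeneous {k n : ℕ} (hkn : k ≤ n) {x : ∀ i, H i} {t : ℕ → Bool}
    (hx : ∀ i < k, U i (x i) = (-1 : ℂ) ^ (t i).toNat • x i) :
    K.siteProd U k (simpleTensor tp n x) =
      (-1 : ℂ) ^ (∑ i ∈ Finset.range k, (t i).toNat) • simpleTensor tp n x := by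
  induction k with
  | zero => simp [siteProd]
  | succ k ih =>
    rw [siteProd, mul_apply_eq_comp, K.site_simpleTensor hkn, hx k k.lt_succ_self,
      K.simpleTensor_update_smul n x hkn, Function.update_eq_self, map_smul,
      ih (by omega) fun i hi => hx i (by omega), smul_smul, ← pow_add, Finset.sum_range_succ_comm]

/-- The operator `T₀ ⊗̂ ⋯ ⊗̂ Tₖ₋₁ ⊗̂ 1 ⊗̂ ⋯`, with `s i` the parity of `T i`, as an ordered
product of Jordan–Wigner operators. -/
def fermiProd (U : ∀ i, H i →L[ℂ] H i) {k : ℕ} (T : (i : Fin k) → H i →L[ℂ] H i)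
    (s : Fin k → Bool) : E →L[ℂ] E :=
  (List.ofFn fun i : Fin k => K.siteProd U i ^ (s i).toNat * K.site i (T i)).prod

lemma fermiProd_succ {k : ℕ} (T : (i : Fin (k + 1)) → H i →L[ℂ] H i) (s : Fin (k + 1) → Bool) :
    K.fermiProd U T s = K.fermiProd U (fun i : Fin k => T i.castSucc) (fun i => s i.castSucc) *
      (K.siteProd U k ^ (s (Fin.last k)).toNat * K.site k (T (Fin.last k))) := by
  rw [fermiProd, List.ofFn_succ', List.prod_concat]
  rfl

lemma fermiProd_simpleTensor {k n : ℕ} (hkn : k ≤ n) (T : (i : Fin k) → H i →L[ℂ] H i)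
    (s : Fin k → Bool) {x : ∀ i, H i} {t : ℕ → Bool}
    (hx : ∀ i < k, U i (x i) = (-1 : ℂ) ^ (t i).toNat • x i) :
    K.fermiProd U T s (simpleTensor tp n x) =
      (-1 : ℂ) ^ (∑ i : Fin k, (s i).toNat * ∑ j ∈ Finset.range i, (t j).toNat) •
        simpleTensor tp n fun i => if h : i < k then T ⟨i, h⟩ (x i) else x i := by
  induction k generalizing x with
  | zero => simp [fermiProd]
  | succ k ih =>
    set x' := Function.update x k (T (Fin.last k) (x k)) with hx'
    have hxx' : ∀ i ≠ k, x' i = x i := fun i hi => Function.update_of_ne hi _ _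
    have hx'U : ∀ i < k, U i (x' i) = (-1 : ℂ) ^ (t i).toNat • x' i := fun i hi => by
      rw [hxx' i hi.ne]
      exact hx i (by omega)
    have hsign : (K.siteProd U k ^ (s (Fin.last k)).toNat) (simpleTensor tp n x') =
        (-1 : ℂ) ^ ((s (Fin.last k)).toNat * ∑ j ∈ Finset.range k, (t j).toNat) •
          simpleTensor tp n x' := by
      cases s (Fin.last k)
      · simp
      · simpa using K.siteProd_simpleTensor_of_homogeneous (by omega) hx'U
    rw [fermiProd_succ, mul_apply_eq_comp, mul_apply_eq_comp, K.site_simpleTensor hkn]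
    change K.fermiProd U _ _ ((K.siteProd U k ^ _) (simpleTensor tp n x')) = _
    rw [hsign, map_smul, ih (by omega) _ _ hx'U, smul_smul, ← pow_add, Fin.sum_univ_castSucc,
      add_comm]
    congr 1
    refine simpleTensor_congr fun i _ => ?_
    rcases lt_trichotomy i k with hi | rfl | hi
    · simp [hi, hi.trans k.lt_succ_self, hxx' i hi.ne]
    · simp [hx', Fin.last]
    · simp [hi.not_gt, not_le.2 hi, hxx' i hi.ne']

lemma fermiProd_apply {k n : ℕ} (hkn : k ≤ n) (T : (i : Fin k) → H i →L[ℂ] H i) (s : Fin k → Bool)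
    {x : (i : Fin n) → H i} {t : Fin n → Bool}
    (hx : ∀ i : Fin n, U i (x i) = cond (t i) (-(x i)) (x i)) :
    K.fermiProd U T s (tp n x) =
      (-1 : ℂ) ^ (Finset.univ.filter fun p : Fin n × Fin n => p.2 < p.1 ∧
        (if h : (p.1 : ℕ) < k then s ⟨p.1, h⟩ else false) = true ∧ t p.2 = true).card •
        tp n fun i => if h : (i : ℕ) < k then T ⟨i, h⟩ (x i) else x i := by
  let y : ∀ i, H i := fun i => if h : i < n then x ⟨i, h⟩ else ξ i
  let t' : ℕ → Bool := fun i => if h : i < n then t ⟨i, h⟩ else false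
  have hyx : (fun i : Fin n => y i) = x := funext fun i => by simp [y]
  have hy : ∀ i < k, U i (y i) = (-1 : ℂ) ^ (t' i).toNat • y i := fun i hi => by
    simpa only [y, t', hi.trans_le hkn, dite_true, cond_neg_eq_smul] using
      hx ⟨i, hi.trans_le hkn⟩
  rw [card_filter_koszul hkn s (t := t') fun i => by simp [t'], ← hyx]
  exact K.fermiProd_simpleTensor hkn T s hy

lemma mem_infFermiGen_iff (hU : ∀ i, U i * U i = 1) {S : ∀ i, Set (H i →L[ℂ] H i)} {g : E →L[ℂ] E} :
    g ∈ infFermiGen U tp S ↔ ∃ (k : ℕ) (T : (i : Fin k) → H i →L[ℂ] H i) (s : Fin k → Bool),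
      (∀ i : Fin k, T i ∈ S i) ∧ (∀ i : Fin k, ScaledCommute ((-1) ^ (s i).toNat) (U i) (T i)) ∧
        g = K.fermiProd U T s := by
  simp only [infFermiGen, Set.mem_ofPred_eq, cond_neg_eq_smul (V := _ →L[ℂ] _),
    scaledCommute_iff_conj_eq (hU _)]
  constructor
  · rintro ⟨k, T, s, hT, hs, hg⟩
    refine ⟨k, T, s, hT, hs, K.ext_homogeneous hU k fun n hn x t hx => ?_⟩
    rw [hg n hn x t hx, K.fermiProd_apply hn T s hx]
  · rintro ⟨k, T, s, hT, hs, rfl⟩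
    exact ⟨k, T, s, hT, hs, fun n hn x t hx => K.fermiProd_apply hn T s hx⟩

theorem centralizer_infFermiGen (hU : ∀ i, U i * U i = 1) {S : ∀ i, Set (H i →L[ℂ] H i)}
    (hS : ∀ i, 1 ∈ S i) : Set.centralizer (infFermiGen U tp S) =
      Set.centralizer (K.jordanWigner (K.siteProd U) U S) := by
  have hprod : infFermiGen U tp S ⊆ Submonoid.closure (K.jordanWigner (K.siteProd U) U S) := by
    intro g hg
    obtain ⟨k, T, s, hT, hs, rfl⟩ := (K.mem_infFermiGen_iff hU).1 hg
    refine Submonoid.list_prod_mem _ fun z hz => ?_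
    obtain ⟨i, rfl⟩ := List.mem_ofFn.1 hz
    exact Submonoid.subset_closure ⟨i, T i, hT i, s i, hs i, rfl⟩
  have hgen : K.jordanWigner (K.siteProd U) U S ⊆ infFermiGen U tp S := by
    rintro _ ⟨i, a, ha, p, hap, rfl⟩
    refine (K.mem_infFermiGen_iff hU).2 ⟨i + 1,
      Fin.snoc (α := fun j : Fin (i + 1) => H j →L[ℂ] H j) (fun _ => 1) a,
      Fin.snoc (α := fun _ => Bool) (fun _ => false) p, fun j => ?_, fun j => ?_, ?_⟩
    · induction j using Fin.lastCases <;> simp [ha, hS]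
    · induction j using Fin.lastCases
      · simpa using hap
      · simp [scaledCommute_one_iff]
    · rw [fermiProd_succ]
      simp [fermiProd]
  refine subset_antisymm (Set.centralizer_subset hgen) ?_
  rw [← Set.centralizer_centralizer_centralizer (K.jordanWigner _ U S)]
  exact Set.centralizer_subset
    (hprod.trans (Submonoid.closure_le_centralizer_centralizer _))

end IsInfiniteTensorProduct

end FermiProduct

section Twist

lemma image_centralizer_mulEquiv {F M N : Type*} [Mul M] [Mul N] [EquivLike F M N]
    [MulEquivClass F M N] (e : F) (S : Set M) :
    e '' Set.centralizer S = Set.centralizer (e '' S) := by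
  refine Set.Subset.antisymm ?_ fun y hy => ?_
  · rintro _ ⟨x, hx, rfl⟩ _ ⟨m, hm, rfl⟩
    rw [← map_mul, hx m hm, map_mul]
  · obtain ⟨x, rfl⟩ := EquivLike.surjective e y
    refine ⟨x, fun m hm => EquivLike.injective e ?_, rfl⟩
    simpa only [map_mul] using hy (e m) ⟨m, hm, rfl⟩

variable {E : Type*} [NormedAddCommGroup E] [InnerProductSpace ℂ E] {U : E →L[ℂ] E}

lemma twist_of_scaledCommute (hU : U * U = 1) {p : Bool} {T : E →L[ℂ] E}
    (hT : ScaledCommute ((-1) ^ p.toNat) U T) :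
    twist U T = (Complex.I • U) ^ p.toNat * T := by
  rw [scaledCommute_iff_conj_eq hU] at hT
  rw [twist, hT]
  cases p
  · simp only [Bool.toNat_false, pow_zero, one_smul, sub_self, mul_zero, smul_zero, add_zero,
      one_mul]
    module
  · simp only [Bool.toNat_true, pow_one, mul_add, smul_mul_assoc, neg_one_smul, sub_neg_eq_add]
    module

variable [CompleteSpace E]

lemma exists_vonNeumannAlgebra_coe_eq {S : Set (E →L[ℂ] E)}
    (hS : Set.centralizer (Set.centralizer S) = S) (hstar : ∀ T ∈ S, star T ∈ S) :
    ∃ A : VonNeumannAlgebra E, (A : Set (E →L[ℂ] E)) = S := by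
  have hunion : S ∪ star S = S := Set.union_eq_left.2 fun T hT => star_star T ▸ hstar _ hT
  let A : StarSubalgebra ℂ (E →L[ℂ] E) := .centralizer ℂ (StarSubalgebra.centralizer ℂ S)
  have hA : (A : Set (E →L[ℂ] E)) = S := by
    rw [StarSubalgebra.coe_centralizer_centralizer, hunion, hS]
  have hA' : Set.centralizer (Set.centralizer (A : Set (E →L[ℂ] E))) = A := by rw [hA, hS]
  exact ⟨⟨A, hA'⟩, hA⟩

/-- A unitary operator implementing the twist automorphism `η_U` of a grading operator `U`. -/
def twistUnitary (U : E →L[ℂ] E) : E →L[ℂ] E :=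
  ((1 - Complex.I) / 2) • 1 + ((1 + Complex.I) / 2) • U

variable (hUstar : star U = U) (hU : U * U = 1)
include hUstar

lemma star_twistUnitary :
    star (twistUnitary U) = ((1 + Complex.I) / 2) • 1 + ((1 - Complex.I) / 2) • U := by
  simp [twistUnitary, hUstar, sub_eq_add_neg]

include hU

lemma twistUnitary_mem_unitary : twistUnitary U ∈ unitary (E →L[ℂ] E) := by
  rw [Unitary.mem_iff, star_twistUnitary hUstar, twistUnitary]
  constructor <;>
  · simp only [add_mul, mul_add, smul_mul_assoc, mul_smul_comm, one_mul, mul_one, hU]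
    match_scalars
    · linear_combination -Complex.I_sq / 2
    · linear_combination Complex.I_sq / 2

lemma twist_eq_conj (T : E →L[ℂ] E) : twist U T = twistUnitary U * T * star (twistUnitary U) := by
  have hUU : U * (U * (T * U)) = T * U := by rw [← mul_assoc, hU, one_mul]
  rw [star_twistUnitary hUstar, twistUnitary, twist]
  simp only [add_mul, mul_add, smul_mul_assoc, mul_smul_comm, one_mul, mul_one, smul_add, mul_sub,
    smul_sub, mul_assoc, hUU]
  match_scalars
  · linear_combination Complex.I_sq / 4
  · linear_combination Complex.I_sq / 4
  · linear_combination -Complex.I_sq / 4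
  · linear_combination -Complex.I_sq / 4

/-- The twist `η_U` as a star algebra automorphism. -/
def twistEquiv : (E →L[ℂ] E) ≃⋆ₐ[ℂ] (E →L[ℂ] E) :=
  Unitary.conjStarAlgAut ℂ _ ⟨twistUnitary U, twistUnitary_mem_unitary hUstar hU⟩

lemma coe_twistEquiv : ⇑(twistEquiv hUstar hU) = twist U :=
  funext fun T => (twist_eq_conj hUstar hU T).symm

lemma twist_image_centralizer (S : Set (E →L[ℂ] E)) :
    twist U '' Set.centralizer S = Set.centralizer (twist U '' S) := by
  rw [← coe_twistEquiv hUstar hU]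
  exact image_centralizer_mulEquiv (twistEquiv hUstar hU) S

lemma exists_vonNeumannAlgebra_coe_eq_twist_image {N : Set (E →L[ℂ] E)}
    (hN : Set.centralizer (Set.centralizer N) = N) (hNstar : ∀ T ∈ N, star T ∈ N) :
    ∃ A : VonNeumannAlgebra E, (A : Set (E →L[ℂ] E)) = twist U '' N := by
  refine exists_vonNeumannAlgebra_coe_eq ?_ ?_
  · rw [← twist_image_centralizer hUstar hU, ← twist_image_centralizer hUstar hU, hN]
  · rintro _ ⟨T, hT, rfl⟩
    exact ⟨star T, hNstar T hT, by
      rw [← coe_twistEquiv hUstar hU]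
      exact ((twistEquiv hUstar hU).map_star' T)⟩

lemma twistEquiv_self : twistEquiv hUstar hU U = U := by
  rw [coe_twistEquiv, twist_of_scaledCommute hU (p := false)]
  · simp
  · simp [scaledCommute_one_iff]

lemma twist_conj (T : E →L[ℂ] E) : twist U (U * T * U) = U * twist U T * U := by
  rw [← coe_twistEquiv hUstar hU, map_mul, map_mul, twistEquiv_self]

lemma scaledCommute_twist_iff {c : ℂ} {T : E →L[ℂ] E} :
    ScaledCommute c U (twist U T) ↔ ScaledCommute c U T := by
  rw [scaledCommute_iff_conj_eq hU, scaledCommute_iff_conj_eq hU, ← twist_conj hUstar hU,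
    ← coe_twistEquiv hUstar hU, ← map_smul, EmbeddingLike.apply_eq_iff_eq]

end Twist

section TwistedCommutation

variable {H : ℕ → Type*} [∀ i, NormedAddCommGroup (H i)] [∀ i, InnerProductSpace ℂ (H i)]
  [∀ i, CompleteSpace (H i)] {E : Type*} [NormedAddCommGroup E] [InnerProductSpace ℂ E]
  [CompleteSpace E] {ξ : ∀ i, H i} {tp : (n : ℕ) → ((i : Fin n) → H i) → E}

namespace IsInfiniteTensorProduct

variable (K : IsInfiniteTensorProduct ξ tp) {U : ∀ i, H i →L[ℂ] H i} {W : E →L[ℂ] E}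
  (hUstar : ∀ i, star (U i) = U i) (hU : ∀ i, U i * U i = 1)
  (hW : ∀ n (x : ∀ i, H i), W (simpleTensor tp n x) = simpleTensor tp n fun i => U i (x i))
include hU hW

lemma twist_siteProd_pow_mul_site {i : ℕ} {a : H i →L[ℂ] H i} {p : Bool}
    (ha : ScaledCommute ((-1) ^ p.toNat) (U i) a) :
    twist W (K.siteProd U i ^ p.toNat * K.site i a) =
      (K.siteProd U (i + 1) * W) ^ p.toNat * K.site i (twist (U i) a) := by
  have hWklein := K.isKleinFamily_const hW
  have hWF : Commute W (K.siteProd U i) := hWklein.commute (K.isKleinFamily_siteProd U) 0 i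
  have hWU : Commute W (K.site i (U i)) := by
    simpa [scaledCommute_one_iff] using
      hWklein.scaledCommute_site 0 (p := 0) (by simp [scaledCommute_one_iff])
  have hWg : ScaledCommute ((-1) ^ p.toNat) W (K.siteProd U i ^ p.toNat * K.site i a) := by
    simpa using (scaledCommute_one_iff.2 (hWF.pow_right p.toNat)).mul_right
      (hWklein.scaledCommute_site 0 ha)
  have hUU : K.site i (U i) * K.site i (U i) = 1 := by rw [← map_mul, hU, map_one]
  rw [twist_of_scaledCommute (hWklein.mul_self_eq_one hU 0) hWg, twist_of_scaledCommute (hU i) ha]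
  cases p
  · simp
  · simp only [Bool.toNat_true, pow_one, map_mul, map_smul, smul_mul_assoc, mul_smul_comm]
    congr 1
    calc W * (K.siteProd U i * K.site i a)
        = K.siteProd U i * (K.site i (U i) * K.site i (U i)) * W * K.site i a := by
          rw [hUU, mul_one, ← mul_assoc, hWF.eq]
      _ = K.siteProd U i * K.site i (U i) * (W * K.site i (U i)) * K.site i a := by
          rw [hWU.eq]; simp only [mul_assoc]
      _ = K.siteProd U (i + 1) * W * (K.site i (U i) * K.site i a) := by
          simp only [siteProd, mul_assoc]

include hUstar

theorem twist_image_jordanWigner (N : ∀ i, Set (H i →L[ℂ] H i)) :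
    twist W '' K.jordanWigner (K.siteProd U) U N =
      K.jordanWigner (fun i => K.siteProd U (i + 1) * W) U fun i => twist (U i) '' N i := by
  ext g
  constructor
  · rintro ⟨_, ⟨i, a, ha, p, hap, rfl⟩, rfl⟩
    exact ⟨i, _, ⟨a, ha, rfl⟩, p, (scaledCommute_twist_iff (hUstar i) (hU i)).2 hap,
      K.twist_siteProd_pow_mul_site hU hW hap⟩
  · rintro ⟨i, _, ⟨a, ha, rfl⟩, p, hap, rfl⟩
    have hap' := (scaledCommute_twist_iff (hUstar i) (hU i)).1 hap
    exact ⟨_, ⟨i, a, ha, p, hap', rfl⟩, K.twist_siteProd_pow_mul_site hU hW hap'⟩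

theorem twist_image_centralizer_jordanWigner {N : ∀ i, Set (H i →L[ℂ] H i)}
    (hN : ∀ i, Set.centralizer (Set.centralizer (N i)) = N i)
    (hNstar : ∀ i, ∀ T ∈ N i, star T ∈ N i) (hUN : ∀ i, ∀ T ∈ N i, U i * T * U i ∈ N i) :
    twist W '' Set.centralizer (K.jordanWigner (K.siteProd U) U N) =
      Set.centralizer (Set.centralizer
        (K.jordanWigner (K.siteProd U) U fun i => twistedComm (U i) (N i))) := by
  choose A hA using fun i =>
    exists_vonNeumannAlgebra_coe_eq_twist_image (hUstar i) (hU i) (hN i) (hNstar i)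
  have hA' : ∀ i, ((A i).commutant : Set (H i →L[ℂ] H i)) = twistedComm (U i) (N i) := fun i => by
    rw [VonNeumannAlgebra.coe_commutant, hA, twistedComm, twist_image_centralizer (hUstar i) (hU i)]
  have hUA : ∀ i, ∀ a ∈ A i, U i * a * U i ∈ A i := by
    simp only [← SetLike.mem_coe, hA]
    rintro i _ ⟨T, hT, rfl⟩
    exact ⟨_, hUN i T hT, twist_conj (hUstar i) (hU i) T⟩
  have hWklein := K.isKleinFamily_const hW
  have htail := (K.isKleinFamily_siteProd_succ_mul hW hU).centralizer_jordanWigner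
    (K.isKleinFamily_siteProd U) hUstar hU hUA
  simp only [hA, hA'] at htail
  rw [twist_image_centralizer (hWklein.star_eq hUstar 0) (hWklein.mul_self_eq_one hU 0),
    K.twist_image_jordanWigner hUstar hU hW, htail]

end IsInfiniteTensorProduct

end TwistedCommutation

/-- Theorem 4.6, twisted commutation theorem for infinitely many factors.
Let `(H i, U i)` be `ℤ₂`-graded Hilbert spaces, `N i` von Neumann algebras on `H i` with
`Uᵢ Nᵢ Uᵢ = Nᵢ`, and `ξ = (ξᵢ)` a sequence of unit vectors with `Uᵢ ξᵢ = ξᵢ`.  Then on the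
infinite tensor product Hilbert space `⊗_ξ H i` (realized by `HH` with simple tensor maps
`tp`), graded by `W = ⊗ U i`, the twisted commutant of the infinite Fermi tensor product
satisfies `(⊗̂_ξ N i)^≀ = ⊗̂_ξ (N i)^≀`. -/
theorem statement18 (H : ℕ → Type*) [∀ i, NormedAddCommGroup (H i)]
    [∀ i, InnerProductSpace ℂ (H i)] [∀ i, CompleteSpace (H i)]
    (U : ∀ i : ℕ, H i →L[ℂ] H i)
    (hUsa : ∀ i, star (U i) = U i) (hUunit : ∀ i, U i * U i = 1)
    (ξv : ∀ i : ℕ, H i) (hξnorm : ∀ i, ‖ξv i‖ = 1) (hξU : ∀ i, U i (ξv i) = ξv i)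
    {HH : Type*} [NormedAddCommGroup HH] [InnerProductSpace ℂ HH] [CompleteSpace HH]
    -- a realization of the infinite tensor product Hilbert space `⊗_ξ H i`
    (tp : (n : ℕ) → ((i : Fin n) → H i.val) → HH)
    (htp_ml : ∀ (n : ℕ) (x : (i : Fin n) → H i.val) (i : Fin n) (u v : H i.val) (c : ℂ),
      tp n (Function.update x i (c • u + v)) =
        c • tp n (Function.update x i u) + tp n (Function.update x i v))
    (htp_inner : ∀ (n : ℕ) (x y : (i : Fin n) → H i.val),
      ⟪tp n x, tp n y⟫_ℂ = ∏ i : Fin n, ⟪x i, y i⟫_ℂ)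
    (htp_compat : ∀ (n : ℕ) (x : (i : Fin n) → H i.val),
      tp (n + 1) (Fin.snoc x (ξv n)) = tp n x)
    (htp_dense : Dense (Submodule.span ℂ (⋃ n : ℕ, Set.range (tp n)) : Set HH))
    -- the grading `W = ⊗ U i`
    (W : HH →L[ℂ] HH)
    (hW : ∀ (n : ℕ) (x : (i : Fin n) → H i.val), W (tp n x) = tp n (fun i => U i.val (x i)))
    -- the von Neumann algebras
    (N : ∀ i : ℕ, Set (H i →L[ℂ] H i))
    (hN : ∀ i, Set.centralizer (Set.centralizer (N i)) = N i)
    (hNstar : ∀ i, ∀ T ∈ N i, star T ∈ N i)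
    (hNgrad : ∀ i, (fun T : H i →L[ℂ] H i => U i * T * U i) '' N i = N i) :
    twistedComm W (Set.centralizer (Set.centralizer (infFermiGen U tp N))) =
      Set.centralizer (Set.centralizer
        (infFermiGen U tp (fun i => twistedComm (U i) (N i)))) := by
  have K : IsInfiniteTensorProduct ξv tp := ⟨hξnorm, htp_ml, htp_inner, htp_compat, htp_dense⟩
  have hW' : ∀ n (x : ∀ i, H i), W (simpleTensor tp n x) = simpleTensor tp n fun i => U i (x i) :=
    fun n x => hW n fun i => x i
  have hN_one : ∀ i, 1 ∈ N i := fun i => hN i ▸ Set.one_mem_centralizer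
  have hUN : ∀ i, ∀ T ∈ N i, U i * T * U i ∈ N i := fun i T hT => (hNgrad i).subset ⟨T, hT, rfl⟩
  have hNtw_one : ∀ i, 1 ∈ twistedComm (U i) (N i) := fun i => by
    rw [twistedComm, twist_image_centralizer (hUsa i) (hUunit i)]
    exact Set.one_mem_centralizer
  rw [twistedComm, Set.centralizer_centralizer_centralizer, K.centralizer_infFermiGen hUunit hN_one,
    K.twist_image_centralizer_jordanWigner hUsa hUunit hW' hN hNstar hUN,
    K.centralizer_infFermiGen hUunit hNtw_one]

end
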